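/- arXiv:1001.2026 — 2 statements merged into one kernel-verified Lean document; each statement's English description precedes it below -/
import Mathlib

section
/- Let X be a complex separable infinite-dimensional Banach space and let T be a bounded linear operator on X satisfying assumption (H'): there exists a sequence (x_n)_{n≥1} of eigenvectors of T with T x_n = λ_n x_n, |λ_n| = 1, ‖x_n‖ = 1, such that (i) the linear span of {x_n : n ≥ 1} is dense in X, and (ii) for any finite subset F of σ_p(T)∩𝕋, the closure of {x_n : n ≥ 1} equals the closure of {x_n : n ∈ A_F}, where A_F = {n ≥ 1 : λ_n ∉ F}. Then T is frequently hypercyclic. -/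
open MeasureTheory Filter Topology

open scoped Classical in
/-- Lower density of a set of natural numbers. -/
noncomputable def lowerDensity (A : Set ℕ) : ℝ :=
  Filter.atTop.liminf fun N : ℕ =>
    (((Finset.range N).filter (fun n => n ∈ A)).card : ℝ) / (N : ℝ)

/-- `x` is a frequently hypercyclic vector for `T`. -/
def FreqHCVector {X : Type*} [NormedAddCommGroup X] [NormedSpace ℂ X]
    (T : X →L[ℂ] X) (x : X) : Prop :=
  ∀ U : Set X, IsOpen U → U.Nonempty → 0 < lowerDensity {n : ℕ | (T ^ n) x ∈ U}

/-- `T` is frequently hypercyclic. -/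
def FrequentlyHypercyclic {X : Type*} [NormedAddCommGroup X] [NormedSpace ℂ X]
    (T : X →L[ℂ] X) : Prop :=
  ∃ x : X, FreqHCVector T x

/-- `T` is hypercyclic. -/
def Hypercyclic {X : Type*} [NormedAddCommGroup X] [NormedSpace ℂ X]
    (T : X →L[ℂ] X) : Prop :=
  ∃ x : X, Dense (Set.range fun n : ℕ => (T ^ n) x)

/-- `T` has a perfectly spanning set of eigenvectors associated to unimodular
eigenvalues: there is a continuous (atomless) probability measure `σ` on the unit
circle such that whenever `A` is a measurable subset of the circle with `σ A = 1`,
the span of the eigenspaces `ker (T - c)`, `c ∈ A`, is dense in `X`. -/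
def PerfectlySpanning {X : Type*} [NormedAddCommGroup X] [NormedSpace ℂ X]
    (T : X →L[ℂ] X) : Prop :=
  ∃ σ : Measure ℂ, IsProbabilityMeasure σ ∧ (∀ c : ℂ, σ {c} = 0) ∧
    σ {c : ℂ | ‖c‖ = 1} = 1 ∧
    ∀ A : Set ℂ, A ⊆ {c : ℂ | ‖c‖ = 1} → MeasurableSet A → σ A = 1 →
      Dense (Submodule.span ℂ (⋃ c ∈ A, {x : X | T x = c • x}) : Set X)

/-!
A frequently hypercyclic vector is built as the limit of vectors of the span of the `x n`, whose
orbits are almost periodic and hence return to any ball they meet with bounded gaps. To move from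
`z` to a vector whose orbit also meets a ball around a new target, one has to add a perturbation
whose orbit is small except on a set of times of small density. For the target `z + a • x i`, the
basic perturbation is `c • (x j₁ - x j₂)` with `x j₁`, `x j₂` close to `x i` and eigenvalues
different from that of `x i`: it is small, but at a suitable return time of `z + c • x j₁` the
coefficient of `x j₂` has changed its sign, and the perturbation has become close to
`(2 * c) • x i`. Adding `n` such perturbations with `c = a / (2 * n)`, whose coefficients are almost
orthogonal in time mean, gives total displacement `a • x i` with mean square `O(1 / n)`, so by
Chebyshev's inequality the orbit of the sum is rarely large.
-/

open scoped ComplexConjugate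

/-! ### Densities of sets of natural numbers -/

open scoped Classical in
/-- The number of elements of `A` below `N`, the counting function in `lowerDensity`. -/
noncomputable def countBelow (A : Set ℕ) (N : ℕ) : ℕ :=
  Nat.count (· ∈ A) N

/-- `A` has at most `η * N` elements below every `N`. Unlike a bound on the upper density of `A`,
this constrains every initial segment and hence survives countable unions. -/
def UniformDensityLE (A : Set ℕ) (η : ℝ) : Prop :=
  ∀ N : ℕ, (countBelow A N : ℝ) ≤ η * N

/-- `A` has bounded gaps. -/
def IsSyndetic (A : Set ℕ) : Prop :=
  ∃ L : ℕ, ∀ n : ℕ, (A ∩ Set.Icc n (n + L)).Nonempty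

section Density

variable {A B S : Set ℕ} {a b η : ℝ}

theorem lowerDensity_eq_liminf_countBelow (A : Set ℕ) :
    lowerDensity A = atTop.liminf fun N : ℕ => (countBelow A N : ℝ) / N := by
  simp only [lowerDensity, countBelow, Nat.count_eq_card_filter_range]

theorem countBelow_mono (h : A ⊆ B) (N : ℕ) : countBelow A N ≤ countBelow B N := by
  classical exact Nat.count_mono_left fun _ _ hn => h hn

theorem countBelow_monotone (A : Set ℕ) : Monotone (countBelow A) := by
  classical exact Nat.count_monotone _

theorem countBelow_le (A : Set ℕ) (N : ℕ) : countBelow A N ≤ N := by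
  classical exact Nat.count_le _

theorem countBelow_union_le (A B : Set ℕ) (N : ℕ) :
    countBelow (A ∪ B) N ≤ countBelow A N + countBelow B N := by
  classical
  simp only [countBelow, Nat.count_eq_card_filter_range, Set.mem_union, Finset.filter_or]
  exact Finset.card_union_le _ _

theorem countBelow_iUnion_le {ι : Type*} (B : ι → Set ℕ) (N : ℕ) :
    ∃ s : Finset ι, countBelow (⋃ i, B i) N ≤ ∑ i ∈ s, countBelow (B i) N := by
  classical
  simp only [countBelow, Nat.count_eq_card_filter_range]
  have hcover : ((Finset.range N).filter (· ∈ ⋃ i, B i) : Set ℕ) ⊆ ⋃ i, B i := fun k hk =>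
    (Finset.mem_filter.1 hk).2
  obtain ⟨s, hs, hsub⟩ := Set.finite_subset_iUnion (Finset.finite_toSet _) hcover
  lift s to Finset ι using hs
  refine ⟨s, (Finset.card_le_card fun k hk => ?_).trans Finset.card_biUnion_le⟩
  obtain ⟨i, his, hki⟩ := Set.mem_iUnion₂.1 (hsub hk)
  exact Finset.mem_biUnion.2 ⟨i, his, Finset.mem_filter.2 ⟨(Finset.mem_filter.1 hk).1, hki⟩⟩

theorem le_lowerDensity (h : ∀ᶠ N : ℕ in atTop, a ≤ (countBelow A N : ℝ) / N) :
    a ≤ lowerDensity A := by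
  rw [lowerDensity_eq_liminf_countBelow]
  refine le_liminf_of_le (IsBoundedUnder.isCoboundedUnder_ge (isBoundedUnder_of ⟨1, fun N => ?_⟩)) h
  exact div_le_one_of_le₀ (mod_cast countBelow_le A N) (by positivity)

theorem eventually_lt_of_lt_lowerDensity (h : a < lowerDensity A) :
    ∀ᶠ N : ℕ in atTop, a < (countBelow A N : ℝ) / N := by
  rw [lowerDensity_eq_liminf_countBelow] at h
  exact eventually_lt_of_lt_liminf h (isBoundedUnder_of ⟨0, fun N => by positivity⟩)

theorem lowerDensity_pos_of_subset_union (hS : S ⊆ A ∪ B) (hB : UniformDensityLE B η)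
    (hη : η < lowerDensity S) : 0 < lowerDensity A := by
  obtain ⟨c, hηc, hcS⟩ := exists_between hη
  refine (sub_pos.2 hηc).trans_le (le_lowerDensity ?_)
  filter_upwards [eventually_lt_of_lt_lowerDensity hcS, eventually_gt_atTop 0] with N hN hNpos
  have hcount : (countBelow S N : ℝ) ≤ countBelow A N + countBelow B N :=
    mod_cast (countBelow_mono hS N).trans (countBelow_union_le A B N)
  have hNpos' : (0 : ℝ) < N := mod_cast hNpos
  rw [lt_div_iff₀ hNpos'] at hN
  rw [le_div_iff₀ hNpos', sub_mul]
  linarith [hB N]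

namespace UniformDensityLE

theorem mono (hB : UniformDensityLE B b) (hAB : A ⊆ B) (hba : b ≤ a) : UniformDensityLE A a :=
  fun N => (mod_cast countBelow_mono hAB N : (countBelow A N : ℝ) ≤ countBelow B N).trans
    ((hB N).trans (by gcongr))

theorem nonneg (hA : UniformDensityLE A a) : 0 ≤ a := by
  simpa using (Nat.cast_nonneg _).trans (hA 1)

theorem empty : UniformDensityLE ∅ 0 := fun N => by simp [countBelow]

theorem union (hA : UniformDensityLE A a) (hB : UniformDensityLE B b) :
    UniformDensityLE (A ∪ B) (a + b) := fun N => by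
  have hcount : (countBelow (A ∪ B) N : ℝ) ≤ countBelow A N + countBelow B N :=
    mod_cast countBelow_union_le A B N
  linarith [hA N, hB N]

theorem iUnion {ι : Type*} {B : ι → Set ℕ} {q : ι → ℝ} (hB : ∀ i, UniformDensityLE (B i) (q i))
    (hq : Summable q) : UniformDensityLE (⋃ i, B i) (∑' i, q i) := fun N => by
  obtain ⟨s, hs⟩ := countBelow_iUnion_le B N
  calc (countBelow (⋃ i, B i) N : ℝ) ≤ ∑ i ∈ s, (countBelow (B i) N : ℝ) := mod_cast hs
    _ ≤ ∑ i ∈ s, q i * N := Finset.sum_le_sum fun i _ => hB i N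
    _ = (∑ i ∈ s, q i) * N := (Finset.sum_mul ..).symm
    _ ≤ (∑' i, q i) * N := by gcongr; exact hq.sum_le_tsum s fun i _ => (hB i).nonneg

theorem zero_notMem (hA : UniformDensityLE A a) (ha : a < 1) : 0 ∉ A := fun h0 => by
  have hone : (countBelow A 1 : ℝ) = 1 := by simp [countBelow, Nat.count_succ, h0]
  have hle := hA 1
  rw [hone, Nat.cast_one, mul_one] at hle
  exact hle.not_gt ha

end UniformDensityLE

theorem le_countBelow_mul_of_gaps_le {L : ℕ} (hA : ∀ n, (A ∩ Set.Icc n (n + L)).Nonempty) (q : ℕ) :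
    q ≤ countBelow A (q * (L + 1)) := by
  classical
  induction q with
  | zero => simp
  | succ q ih =>
    obtain ⟨k, hkA, hqk, hkL⟩ := hA (q * (L + 1))
    have hk : k < (q + 1) * (L + 1) := by rw [add_one_mul]; omega
    calc q ≤ countBelow A (q * (L + 1)) := ih
      _ ≤ countBelow A k := countBelow_monotone A hqk
      _ < countBelow A ((q + 1) * (L + 1)) := Nat.count_strict_mono hkA hk

namespace IsSyndetic

theorem lowerDensity_pos (hA : IsSyndetic A) : 0 < lowerDensity A := by
  obtain ⟨L, hL⟩ := hA
  have hpos : (0 : ℝ) < 1 / (2 * (L + 1)) := by positivity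
  refine hpos.trans_le (le_lowerDensity ?_)
  filter_upwards [eventually_ge_atTop (L + 1)] with N hN
  have hcount : N / (L + 1) ≤ countBelow A N :=
    (le_countBelow_mul_of_gaps_le hL _).trans (countBelow_monotone A (Nat.div_mul_le_self _ _))
  have hone : 1 ≤ N / (L + 1) := (Nat.one_le_div_iff (by omega)).2 hN
  have hlt : N < (N / (L + 1) + 1) * (L + 1) := Nat.lt_mul_of_div_lt (Nat.lt_succ_self _) (by omega)
  have hN2 : N ≤ 2 * (L + 1) * countBelow A N := by nlinarith
  rw [div_le_div_iff₀ (by positivity) (by exact_mod_cast (by omega : 0 < N)), one_mul, mul_comm]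
  exact_mod_cast hN2

theorem of_add_preimage {m : ℕ} (hA : IsSyndetic {k | m + k ∈ A}) : IsSyndetic A := by
  obtain ⟨L, hL⟩ := hA
  refine ⟨m + L, fun n => ?_⟩
  obtain ⟨k, hkA, hnk, hkL⟩ := hL n
  exact ⟨m + k, hkA, by omega, by omega⟩

end IsSyndetic

end Density

/-! ### Bohr recurrence -/

theorem isSyndetic_pow_mem_of_mem_nhds_one {G : Type*} [Group G] [TopologicalSpace G]
    [IsTopologicalGroup G] [CompactSpace G] (g : G) {V : Set G} (hV : V ∈ 𝓝 (1 : G)) :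
    IsSyndetic {k | g ^ k ∈ V} := by
  have hcover : closure (Set.range fun k : ℕ => g ^ k) ⊆
      ⋃ k : ℕ, {h : G | (g ^ k)⁻¹ * h ∈ interior V} := fun h hh => by
    have hopen : IsOpen {y : G | y⁻¹ * h ∈ interior V} := isOpen_interior.preimage (by fun_prop)
    obtain ⟨_, hy, k, rfl⟩ := mem_closure_iff.1 hh _ hopen
      (by simpa using mem_interior_iff_mem_nhds.2 hV)
    exact Set.mem_iUnion.2 ⟨k, hy⟩
  obtain ⟨t, ht⟩ := isClosed_closure.isCompact.elim_finite_subcover _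
    (fun k => isOpen_interior.preimage (by fun_prop)) hcover
  refine ⟨t.sup id, fun n => ?_⟩
  obtain ⟨k, hkt, hk⟩ := Set.mem_iUnion₂.1 (ht (subset_closure ⟨n + t.sup id, rfl⟩))
  have hkL : k ≤ t.sup id := Finset.le_sup (f := id) hkt
  have hpow : g ^ (n + t.sup id) = g ^ k * g ^ (n + t.sup id - k) := by
    rw [← pow_add, Nat.add_sub_cancel' (by omega)]
  refine ⟨n + t.sup id - k, interior_subset (s := V) ?_, by omega, by omega⟩
  simpa only [Set.mem_preimage, hpow, inv_mul_cancel_left] using hk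

/-- The filter of Bohr neighbourhoods of `0` in `ℕ`: it is generated by the sets
`{k | ∀ s ∈ F, ‖s ^ k - 1‖ < ε}` with `F` a finite subset of the circle. -/
noncomputable def bohrFilter : Filter ℕ :=
  comap (fun k (s : Circle) => s ^ k) (𝓝 1)

theorem tendsto_pow_bohrFilter (s : Circle) : Tendsto (fun k : ℕ => s ^ k) bohrFilter (𝓝 1) :=
  ((continuous_apply (A := fun _ : Circle => Circle) s).tendsto 1).comp tendsto_comap

theorem isSyndetic_of_mem_bohrFilter {A : Set ℕ} (hA : A ∈ bohrFilter) : IsSyndetic A := by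
  obtain ⟨V, hV, hVA⟩ := hA
  obtain ⟨L, hL⟩ := isSyndetic_pow_mem_of_mem_nhds_one (id : Circle → Circle) hV
  exact ⟨L, fun n => (hL n).mono (Set.inter_subset_inter_left _ hVA)⟩

theorem norm_circleExp_add_one_le (θ : ℝ) : ‖(Circle.exp θ : ℂ) + 1‖ ≤ |(Real.pi - |θ|)| := by
  have hsub (t : ℝ) (ht : Circle.exp t = -1) : ‖(Circle.exp θ : ℂ) + 1‖ ≤ |θ - t| := by
    have hfactor : (Circle.exp θ : ℂ) + 1 =
        -1 * (Complex.exp (Complex.I * ((θ - t : ℝ) : ℂ)) - 1) := by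
      rw [mul_comm Complex.I, ← Circle.coe_exp, Circle.exp_sub, ht]
      simp; ring
    rw [hfactor, norm_mul, norm_neg, norm_one, one_mul]
    exact Real.norm_exp_I_mul_ofReal_sub_one_le
  have hpi : Circle.exp Real.pi = -1 := by ext; simp
  rcases abs_cases θ with ⟨h, -⟩ | ⟨h, -⟩ <;> rw [h]
  · exact (hsub Real.pi hpi).trans_eq (abs_sub_comm _ _)
  · refine (hsub (-Real.pi) (by simp [hpi])).trans_eq ?_
    rw [sub_neg_eq_add, sub_neg_eq_add, add_comm]

theorem norm_circle_pow_sub_one_le (w : Circle) (n : ℕ) :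
    ‖(w : ℂ) ^ n - 1‖ ≤ n * ‖(w : ℂ) - 1‖ := by
  rw [← geom_sum_mul, norm_mul]
  gcongr
  exact (norm_sum_le _ _).trans (by simp [Circle.norm_coe])

/-- The powers of `w` move along the circle in steps of length about `‖w - 1‖`, so they cannot
jump over `-1`. -/
theorem exists_norm_circle_pow_add_one_le {w : Circle} (hw : w ≠ 1) :
    ∃ m : ℕ, ‖(w : ℂ) ^ m + 1‖ ≤ 2 * ‖(w : ℂ) - 1‖ := by
  set t := (w : ℂ).arg with ht
  have hexp : Circle.exp t = w := Circle.exp_arg w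
  have htpos : 0 < |t| := abs_pos.2 fun h => hw (by rw [← hexp, h, Circle.exp_zero])
  have htle : |t| ≤ 2 * ‖(w : ℂ) - 1‖ := by
    rw [ht, ← Complex.angle_one_right w.coe_ne_zero]
    refine (Complex.angle_le_mul_norm_sub w.norm_coe norm_one).trans ?_
    gcongr
    linarith [Real.pi_le_four]
  set m := ⌊Real.pi / |t|⌋₊
  have hle : m * |t| ≤ Real.pi := (le_div_iff₀ htpos).1 (Nat.floor_le (by positivity))
  have hlt : Real.pi < (m + 1) * |t| := (div_lt_iff₀ htpos).1 (Nat.lt_floor_add_one _)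
  refine ⟨m, ?_⟩
  calc ‖(w : ℂ) ^ m + 1‖ = ‖(Circle.exp (m * t) : ℂ) + 1‖ := by
        rw [Circle.exp_natCast_mul, hexp, Circle.coe_pow]
    _ ≤ |(Real.pi - m * |t|)| := by
        simpa [abs_mul] using norm_circleExp_add_one_le (m * t)
    _ ≤ |t| := by rw [abs_of_nonneg (by linarith)]; linarith
    _ ≤ 2 * ‖(w : ℂ) - 1‖ := htle

theorem IsSyndetic.eventually_exists_norm_pow_add_one_lt {A : Set ℕ} (hA : IsSyndetic A)
    {ε : ℝ} (hε : 0 < ε) : ∀ᶠ w : Circle in 𝓝[≠] 1, ∃ k ∈ A, ‖(w : ℂ) ^ k + 1‖ < ε := by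
  obtain ⟨L, hL⟩ := hA
  have hsmall : ∀ᶠ w : Circle in 𝓝 1, (L + 2) * ‖(w : ℂ) - 1‖ < ε :=
    ContinuousAt.eventually_lt (by fun_prop) continuousAt_const (by simpa using hε)
  filter_upwards [nhdsWithin_le_nhds hsmall, self_mem_nhdsWithin] with w hwε hw
  obtain ⟨m, hm⟩ := exists_norm_circle_pow_add_one_le hw
  obtain ⟨k, hkA, hmk, hkL⟩ := hL m
  refine ⟨k, hkA, lt_of_le_of_lt ?_ hwε⟩
  have hsplit : (w : ℂ) ^ k + 1 = w ^ m * (w ^ (k - m) - 1) + (w ^ m + 1) := by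
    rw [mul_sub, ← pow_add, Nat.add_sub_cancel' hmk]; ring
  calc ‖(w : ℂ) ^ k + 1‖ ≤ ‖(w : ℂ) ^ (k - m) - 1‖ + ‖(w : ℂ) ^ m + 1‖ := by
        rw [hsplit]; exact (norm_add_le _ _).trans_eq (by simp [Circle.norm_coe])
    _ ≤ (k - m : ℕ) * ‖(w : ℂ) - 1‖ + 2 * ‖(w : ℂ) - 1‖ :=
        add_le_add (norm_circle_pow_sub_one_le w _) hm
    _ ≤ L * ‖(w : ℂ) - 1‖ + 2 * ‖(w : ℂ) - 1‖ := by gcongr; omega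
    _ = (L + 2) * ‖(w : ℂ) - 1‖ := by ring

theorem eventually_exists_mem_norm_pow_add_one_lt {A : Set ℕ} (hA : A ∈ bohrFilter) (s : Circle)
    {ε : ℝ} (hε : 0 < ε) : ∀ᶠ ν : Circle in 𝓝[≠] s, ∃ k ∈ A, ‖(ν : ℂ) ^ k + 1‖ < ε := by
  have hs : ∀ᶠ k in bohrFilter, ‖((s ^ k : Circle) : ℂ) - 1‖ < ε / 2 :=
    (tendsto_pow_bohrFilter s).eventually
      (ContinuousAt.eventually_lt (f := fun w : Circle => ‖(w : ℂ) - 1‖) (by fun_prop)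
        continuousAt_const (by simpa using half_pos hε))
  have hdiv : Tendsto (fun ν : Circle => ν / s) (𝓝[≠] s) (𝓝[≠] 1) := by
    refine tendsto_nhdsWithin_iff.2 ⟨?_, ?_⟩
    · exact Tendsto.mono_left (Continuous.tendsto' (by fun_prop) _ _ (div_self' s))
        nhdsWithin_le_nhds
    · filter_upwards [self_mem_nhdsWithin] with ν hν
      exact fun h => hν (div_eq_one.1 h)
  filter_upwards [hdiv.eventually ((isSyndetic_of_mem_bohrFilter
    (inter_mem hA hs)).eventually_exists_norm_pow_add_one_lt (half_pos hε))] with ν hν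
  obtain ⟨k, ⟨hkA, hks⟩, hk⟩ := hν
  refine ⟨k, hkA, ?_⟩
  have hsplit : (ν : ℂ) ^ k + 1 = s ^ k * (((ν / s : Circle) : ℂ) ^ k + 1) - (s ^ k - 1) := by
    rw [mul_add, ← mul_pow, Circle.coe_div, mul_div_cancel₀ _ s.coe_ne_zero]; ring
  calc ‖(ν : ℂ) ^ k + 1‖ ≤ ‖((ν / s : Circle) : ℂ) ^ k + 1‖ + ‖(s : ℂ) ^ k - 1‖ := by
        rw [hsplit]; exact (norm_sub_le _ _).trans_eq (by simp [Circle.norm_coe])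
    _ < ε / 2 + ε / 2 := add_lt_add hk hks
    _ = ε := add_halves ε

/-! ### Mean squares of trigonometric polynomials -/

/-- The mean of `‖f k‖ ^ 2` over every initial segment of `ℕ` is at most `a`. -/
def MeanSquareLE (f : ℕ → ℂ) (a : ℝ) : Prop :=
  ∀ N : ℕ, ∑ k ∈ Finset.range N, ‖f k‖ ^ 2 ≤ a * N

/-- The correlations of `f` with the characters `k ↦ ν ^ k` are bounded, uniformly for `ν` in a
neighbourhood of `s`. This holds for trigonometric polynomials without the frequency `s`. -/
def BoundedCorrelationNear (f : ℕ → ℂ) (s : Circle) : Prop :=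
  ∃ C : ℝ, ∀ᶠ ν : Circle in 𝓝 s, ∀ N : ℕ, ‖∑ k ∈ Finset.range N, f k * conj ((ν : ℂ) ^ k)‖ ≤ C

section MeanSquare

variable {f g : ℕ → ℂ} {s : Circle} {a : ℝ}

theorem MeanSquareLE.uniformDensityLE (hf : MeanSquareLE f a) {t : ℝ} (ht : 0 < t) :
    UniformDensityLE {k | t < ‖f k‖} (a / t ^ 2) := fun N => by
  classical
  rw [div_mul_eq_mul_div, le_div_iff₀ (by positivity)]
  refine le_trans ?_ (hf N)
  rw [countBelow, Nat.count_eq_card_filter_range, ← nsmul_eq_mul]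
  refine (Finset.card_nsmul_le_sum _ (fun k => ‖f k‖ ^ 2) _ fun k hk => ?_).trans
    (Finset.sum_le_sum_of_subset_of_nonneg (Finset.filter_subset _ _) fun _ _ _ => by positivity)
  have hlt : t < ‖f k‖ := (Finset.mem_filter.1 hk).2
  gcongr

namespace BoundedCorrelationNear

theorem zero (s : Circle) : BoundedCorrelationNear 0 s := ⟨0, by simp⟩

theorem add (hf : BoundedCorrelationNear f s) (hg : BoundedCorrelationNear g s) :
    BoundedCorrelationNear (f + g) s := by
  obtain ⟨C, hC⟩ := hf
  obtain ⟨D, hD⟩ := hg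
  refine ⟨C + D, ?_⟩
  filter_upwards [hC, hD] with ν hCν hDν N
  simp only [Pi.add_apply, add_mul, Finset.sum_add_distrib]
  exact (norm_add_le _ _).trans (add_le_add (hCν N) (hDν N))

theorem const_mul (hf : BoundedCorrelationNear f s) (c : ℂ) :
    BoundedCorrelationNear (fun k => c * f k) s := by
  obtain ⟨C, hC⟩ := hf
  refine ⟨‖c‖ * C, ?_⟩
  filter_upwards [hC] with ν hν N
  simp only [mul_assoc, ← Finset.mul_sum, norm_mul]
  gcongr
  exact hν N

theorem sub (hf : BoundedCorrelationNear f s) (hg : BoundedCorrelationNear g s) :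
    BoundedCorrelationNear (f - g) s := by
  simpa only [sub_eq_add_neg, neg_one_mul, ← Pi.neg_def] using hf.add (hg.const_mul (-1))

end BoundedCorrelationNear

theorem norm_circle_geom_sum_le {w : Circle} (hw : w ≠ 1) (N : ℕ) :
    ‖∑ k ∈ Finset.range N, (w : ℂ) ^ k‖ ≤ 2 / ‖(w : ℂ) - 1‖ := by
  rw [geom_sum_eq (mt Circle.coe_eq_one.1 hw), norm_div]
  gcongr
  exact (norm_sub_le _ _).trans_eq (by norm_num [Circle.norm_coe])

theorem boundedCorrelationNear_pow {ν₀ : Circle} (hne : ν₀ ≠ s) :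
    BoundedCorrelationNear (fun k => (ν₀ : ℂ) ^ k) s := by
  have hs : ν₀ / s ≠ 1 := fun h => hne (div_eq_one.1 h)
  have hbound : ∀ᶠ ν : Circle in 𝓝 s,
      2 / ‖((ν₀ / ν : Circle) : ℂ) - 1‖ < 2 / ‖((ν₀ / s : Circle) : ℂ) - 1‖ + 1 := by
    have hcont : Continuous fun ν : Circle => ‖((ν₀ / ν : Circle) : ℂ) - 1‖ :=
      have hcoe : Continuous fun w : Circle => ‖(w : ℂ) - 1‖ := by fun_prop
      hcoe.comp (continuous_const.div' continuous_id)
    refine ContinuousAt.eventually_lt (continuousAt_const.div₀ hcont.continuousAt ?_)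
      continuousAt_const (lt_add_one _)
    simpa only [ne_eq, norm_eq_zero, sub_eq_zero, Circle.coe_eq_one] using hs
  refine ⟨2 / ‖((ν₀ / s : Circle) : ℂ) - 1‖ + 1, ?_⟩
  filter_upwards [hbound, eventually_ne_nhds hne.symm] with ν hν hνne N
  have hterm (k : ℕ) : (ν₀ : ℂ) ^ k * conj ((ν : ℂ) ^ k) = ((ν₀ / ν : Circle) : ℂ) ^ k := by
    rw [map_pow, ← Circle.coe_inv_eq_conj, ← mul_pow, ← Circle.coe_mul, div_eq_mul_inv]
  simp only [hterm]
  exact (norm_circle_geom_sum_le (fun h => hνne (div_eq_one.1 h).symm) N).trans hν.le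

/-- For small `N` the characters `ν ^ k` and `s ^ k` are close, for large `N` the bounded
correlation is absorbed by `δ * N`. -/
theorem BoundedCorrelationNear.eventually_norm_sum_mul_conj_sub_le
    (hf : BoundedCorrelationNear f s) {δ : ℝ} (hδ : 0 < δ) :
    ∀ᶠ ν : Circle in 𝓝 s, ∀ N : ℕ,
      ‖∑ k ∈ Finset.range N, f k * conj ((ν : ℂ) ^ k - (s : ℂ) ^ k)‖ ≤ δ * N := by
  obtain ⟨C, hC⟩ := hf
  obtain ⟨N₀, hN₀⟩ := exists_nat_ge (2 * C / δ)
  have hclose : ∀ᶠ ν : Circle in 𝓝 s, ∀ k ∈ Finset.range N₀,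
      ‖f k * conj ((ν : ℂ) ^ k - (s : ℂ) ^ k)‖ < δ := by
    refine (Filter.eventually_all_finset _).2 fun k _ => ?_
    simp only [norm_mul, RCLike.norm_conj]
    exact ContinuousAt.eventually_lt (by fun_prop) continuousAt_const (by simpa using hδ)
  filter_upwards [hC, hclose] with ν hCν hνclose N
  rcases le_total N N₀ with hN | hN
  · refine (norm_sum_le_of_le _ fun k hk => (hνclose k ?_).le).trans_eq (by simp [mul_comm])
    exact Finset.range_mono hN hk
  · calc ‖∑ k ∈ Finset.range N, f k * conj ((ν : ℂ) ^ k - (s : ℂ) ^ k)‖ ≤ C + C := by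
          simp only [map_sub, mul_sub, Finset.sum_sub_distrib]
          exact (norm_sub_le _ _).trans (add_le_add (hCν N) (hC.self_of_nhds N))
      _ ≤ δ * N₀ := by rw [div_le_iff₀ hδ] at hN₀; linarith
      _ ≤ δ * N := by gcongr

theorem norm_add_mul_pow_sub_pow_sq_le (z c : ℂ) (ν ν' : Circle) (k : ℕ) :
    ‖z + c * ((ν : ℂ) ^ k - (ν' : ℂ) ^ k)‖ ^ 2 ≤
      ‖z‖ ^ 2 + 2 * (conj c * (z * conj ((ν : ℂ) ^ k - (ν' : ℂ) ^ k))).re + 4 * ‖c‖ ^ 2 := by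
  set d := (ν : ℂ) ^ k - (ν' : ℂ) ^ k
  have hnorm : ‖d‖ ≤ 2 := (norm_sub_le _ _).trans_eq (by norm_num [Circle.norm_coe])
  have hsq : ‖c‖ ^ 2 * ‖d‖ ^ 2 ≤ ‖c‖ ^ 2 * 2 ^ 2 := by gcongr
  have hexpand := Complex.normSq_add z (c * d)
  simp only [Complex.normSq_eq_norm_sq, map_mul, mul_left_comm z] at hexpand
  linarith

/-- Adding `c * (ν ^ k - ν' ^ k)` is an almost orthogonal perturbation of `f`, so it costs only
`O(‖c‖ ^ 2)` in mean square. -/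
theorem MeanSquareLE.eventually_add_mul_pow_sub_pow (hf : MeanSquareLE f a)
    (hfs : BoundedCorrelationNear f s) (c : ℂ) {δ : ℝ} (hδ : 0 < δ) :
    ∀ᶠ ν : Circle in 𝓝 s, ∀ᶠ ν' : Circle in 𝓝 s,
      MeanSquareLE (fun k => f k + c * ((ν : ℂ) ^ k - (ν' : ℂ) ^ k)) (a + (4 * ‖c‖ ^ 2 + δ)) := by
  obtain ⟨δ', hδ'pos, hδ'⟩ := exists_pos_mul_lt hδ (4 * ‖c‖)
  have hcross := hfs.eventually_norm_sum_mul_conj_sub_le hδ'pos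
  filter_upwards [hcross] with ν hν
  filter_upwards [hcross] with ν' hν' N
  have hcorr : ‖∑ k ∈ Finset.range N, f k * conj ((ν : ℂ) ^ k - (ν' : ℂ) ^ k)‖ ≤ 2 * δ' * N :=
    calc ‖∑ k ∈ Finset.range N, f k * conj ((ν : ℂ) ^ k - (ν' : ℂ) ^ k)‖
        = ‖∑ k ∈ Finset.range N, f k * conj ((ν : ℂ) ^ k - (s : ℂ) ^ k) -
            ∑ k ∈ Finset.range N, f k * conj ((ν' : ℂ) ^ k - (s : ℂ) ^ k)‖ := by
          simp only [← Finset.sum_sub_distrib, ← mul_sub, ← map_sub, sub_sub_sub_cancel_right]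
      _ ≤ δ' * N + δ' * N := (norm_sub_le _ _).trans (add_le_add (hν N) (hν' N))
      _ = 2 * δ' * N := by ring
  have hre : (conj c * ∑ k ∈ Finset.range N, f k * conj ((ν : ℂ) ^ k - (ν' : ℂ) ^ k)).re ≤
      ‖c‖ * (2 * δ' * N) := by
    refine (Complex.re_le_norm _).trans ?_
    rw [norm_mul, RCLike.norm_conj]
    gcongr
  have hδN : 4 * ‖c‖ * δ' * N ≤ δ * N := by gcongr
  calc ∑ k ∈ Finset.range N, ‖f k + c * ((ν : ℂ) ^ k - (ν' : ℂ) ^ k)‖ ^ 2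
      ≤ ∑ k ∈ Finset.range N, (‖f k‖ ^ 2 +
          2 * (conj c * (f k * conj ((ν : ℂ) ^ k - (ν' : ℂ) ^ k))).re + 4 * ‖c‖ ^ 2) :=
        Finset.sum_le_sum fun k _ => norm_add_mul_pow_sub_pow_sq_le (f k) c ν ν' k
    _ = ∑ k ∈ Finset.range N, ‖f k‖ ^ 2 +
          2 * (conj c * ∑ k ∈ Finset.range N, f k * conj ((ν : ℂ) ^ k - (ν' : ℂ) ^ k)).re +
          4 * ‖c‖ ^ 2 * N := by
        simp only [Finset.sum_add_distrib, ← Finset.mul_sum, ← Complex.re_sum, Finset.sum_const,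
          Finset.card_range, nsmul_eq_mul]
        ring
    _ ≤ (a + (4 * ‖c‖ ^ 2 + δ)) * N := by linarith [hf N]

end MeanSquare

/-! ### Nearby indices of a family -/

section NearbyIndices

variable {ι β Y : Type*}

/-- The indices `j` with `μ j ≠ μ i` for which `x j` is close to `x i`. -/
def nearbyIndices [TopologicalSpace Y] (x : ι → Y) (μ : ι → β) (i : ι) : Filter ι :=
  comap x (𝓝 (x i)) ⊓ 𝓟 {j | μ j ≠ μ i}

theorem nearbyIndices_neBot_iff [TopologicalSpace Y] {x : ι → Y} {μ : ι → β} {i : ι} :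
    (nearbyIndices x μ i).NeBot ↔ x i ∈ closure (x '' {j | μ j ≠ μ i}) := by
  rw [nearbyIndices, ← map_neBot_iff x, Filter.push_pull', map_principal,
    mem_closure_iff_clusterPt, ClusterPt]

theorem tendsto_nearbyIndices [TopologicalSpace Y] (x : ι → Y) (μ : ι → β) (i : ι) :
    Tendsto x (nearbyIndices x μ i) (𝓝 (x i)) :=
  tendsto_comap.mono_left inf_le_left

theorem eventually_ne_nearbyIndices [TopologicalSpace Y] (x : ι → Y) (μ : ι → β) (i : ι) :
    ∀ᶠ j in nearbyIndices x μ i, μ j ≠ μ i :=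
  mem_inf_of_right (mem_principal_self _)

theorem eventually_norm_sub_lt_nearbyIndices [SeminormedAddCommGroup Y] (x : ι → Y) (μ : ι → β)
    (i : ι) {ε : ℝ} (hε : 0 < ε) : ∀ᶠ j in nearbyIndices x μ i, ‖x j - x i‖ < ε := by
  simpa only [dist_eq_norm] using
    (tendsto_nearbyIndices x μ i).eventually (Metric.ball_mem_nhds (x i) hε)

end NearbyIndices

/-! ### Eigenvectors with unimodular eigenvalues -/

section Eigenvectors

variable {X ι : Type*} [NormedAddCommGroup X] [NormedSpace ℂ X] {T : X →L[ℂ] X} {x : ι → X}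
  {μ : ι → Circle}

theorem pow_apply_of_apply_eq_smul {v : X} {c : ℂ} (hv : T v = c • v) (k : ℕ) :
    (T ^ k) v = c ^ k • v := by
  induction k with
  | zero => simp
  | succ k ih =>
    rw [pow_succ', mul_apply_eq_comp, ih, map_smul, hv, smul_smul, pow_succ]

theorem tendsto_pow_apply_bohrFilter (hx : ∀ i, T (x i) = (μ i : ℂ) • x i) {z : X}
    (hz : z ∈ Submodule.span ℂ (Set.range x)) :
    Tendsto (fun k => (T ^ k) z) bohrFilter (𝓝 z) := by
  induction hz using Submodule.span_induction with
  | mem v hv =>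
    obtain ⟨i, rfl⟩ := hv
    have hcoe : Continuous fun w : Circle => (w : ℂ) • x i := by fun_prop
    simpa [Function.comp_def, pow_apply_of_apply_eq_smul (hx i)] using
      (hcoe.tendsto 1).comp (tendsto_pow_bohrFilter (μ i))
  | zero => simpa using tendsto_const_nhds
  | add v w _ _ hv hw => simpa using hv.add hw
  | smul c v _ hv => simpa using hv.const_smul c

theorem isSyndetic_pow_apply_mem (hx : ∀ i, T (x i) = (μ i : ℂ) • x i) {z : X}
    (hz : z ∈ Submodule.span ℂ (Set.range x)) {U : Set X} (hU : IsOpen U) {m : ℕ}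
    (hm : (T ^ m) z ∈ U) : IsSyndetic {k | (T ^ k) z ∈ U} := by
  refine IsSyndetic.of_add_preimage (m := m) (isSyndetic_of_mem_bohrFilter ?_)
  have hlim : Tendsto (fun k => (T ^ (m + k)) z) bohrFilter (𝓝 ((T ^ m) z)) := by
    simpa only [Function.comp_def, pow_add, mul_apply_eq_comp] using
      ((T ^ m).continuous.tendsto z).comp (tendsto_pow_apply_bohrFilter hx hz)
  exact hlim.eventually_mem (hU.mem_nhds hm)

theorem tendsto_eigenvalue_of_tendsto {l : Filter ι} (hx : ∀ i, T (x i) = (μ i : ℂ) • x i) {v : X}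
    {s : Circle} (hv : T v = (s : ℂ) • v) (hv0 : v ≠ 0) (hlim : Tendsto x l (𝓝 v)) :
    Tendsto μ l (𝓝 s) := by
  obtain ⟨φ, hφ⟩ := SeparatingDual.exists_ne_zero (R := ℂ) hv0
  have hφx : Tendsto (fun i => φ (x i)) l (𝓝 (φ v)) := (φ.continuous.tendsto v).comp hlim
  have hφT : Tendsto (fun i => φ (T (x i))) l (𝓝 (φ (T v))) :=
    ((φ.comp T).continuous.tendsto v).comp hlim
  have hquot : φ (T v) / φ v = s := by rw [hv, map_smul, smul_eq_mul, mul_div_cancel_right₀ _ hφ]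
  refine tendsto_subtype_rng.2 (hquot ▸ (hφT.div hφx hφ).congr' ?_)
  filter_upwards [hφx.eventually_ne hφ] with i hi
  simp [hx, hi]

theorem norm_pow_apply_smul_sub_le (hx : ∀ i, T (x i) = (μ i : ℂ) • x i) (c : ℂ) (j₁ j₂ : ι)
    (v : X) (k : ℕ) :
    ‖(T ^ k) (c • (x j₁ - x j₂)) - (c * ((μ j₁ : ℂ) ^ k - (μ j₂ : ℂ) ^ k)) • v‖ ≤
      ‖c‖ * (‖x j₁ - v‖ + ‖x j₂ - v‖) := by
  have hsplit : (T ^ k) (c • (x j₁ - x j₂)) - (c * ((μ j₁ : ℂ) ^ k - (μ j₂ : ℂ) ^ k)) • v =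
      c • ((μ j₁ : ℂ) ^ k • (x j₁ - v) - (μ j₂ : ℂ) ^ k • (x j₂ - v)) := by
    simp only [map_sub, map_smul, pow_apply_of_apply_eq_smul (hx _)]
    module
  rw [hsplit, norm_smul]
  gcongr
  exact (norm_sub_le _ _).trans_eq (by simp [norm_smul, Circle.norm_coe])

theorem norm_pow_add_apply_sub_le (T : X →L[ℂ] X) (y z w b : X) (k₁ k₂ : ℕ) :
    ‖(T ^ (k₁ + k₂)) y - (w + (T ^ k₁) b)‖ ≤
      ‖(T ^ k₁) z - w‖ + ‖T ^ k₁‖ * ‖(T ^ k₂) y - (z + b)‖ := by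
  have hsplit : (T ^ (k₁ + k₂)) y - (w + (T ^ k₁) b) =
      ((T ^ k₁) z - w) + (T ^ k₁) ((T ^ k₂) y - (z + b)) := by
    simp only [pow_add, mul_apply_eq_comp, map_sub, map_add]
    abel
  rw [hsplit]
  exact (norm_add_le _ _).trans (add_le_add_right ((T ^ k₁).le_opNorm _) _)

/-- `x` is a family of eigenvectors of `T` with unimodular eigenvalues `μ`, each of which is a limit
of members of the family with different eigenvalues. This is what condition (ii) of assumption (H')
says about the one-point sets `F = {μ i}`. -/
structure IsNonisolatedEigenfamily (T : X →L[ℂ] X) (x : ι → X) (μ : ι → Circle) : Prop where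
  apply_eq_smul : ∀ i, T (x i) = (μ i : ℂ) • x i
  ne_zero : ∀ i, x i ≠ 0
  mem_closure : ∀ i, x i ∈ closure (x '' {j | μ j ≠ μ i})

/-- `p` is a vector of `P` whose orbit shadows the multiples `f k • v` of `v` up to an error `ε`,
with a coefficient `f` of mean square at most `a` that has bounded correlation with the characters
`k ↦ ν ^ k` for `ν` near `s`. It is meant for an eigenvector `v` with eigenvalue `s`. -/
structure ShadowsMultiples (T : X →L[ℂ] X) (P : Submodule ℂ X) (v : X) (s : Circle) (a ε : ℝ)
    (p : X) (f : ℕ → ℂ) : Prop where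
  mem : p ∈ P
  boundedCorrelationNear : BoundedCorrelationNear f s
  meanSquareLE : MeanSquareLE f a
  norm_pow_apply_sub_smul_le : ∀ k, ‖(T ^ k) p - f k • v‖ ≤ ε

namespace IsNonisolatedEigenfamily

theorem nearbyIndices_neBot (hx : IsNonisolatedEigenfamily T x μ) (i : ι) :
    (nearbyIndices x μ i).NeBot :=
  nearbyIndices_neBot_iff.2 (hx.mem_closure i)

theorem tendsto_eigenvalue (hx : IsNonisolatedEigenfamily T x μ) (i : ι) :
    Tendsto μ (nearbyIndices x μ i) (𝓝[≠] μ i) :=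
  tendsto_nhdsWithin_iff.2
    ⟨tendsto_eigenvalue_of_tendsto hx.apply_eq_smul (hx.apply_eq_smul i) (hx.ne_zero i)
      (tendsto_nearbyIndices x μ i), eventually_ne_nearbyIndices x μ i⟩

/-- At a time `k` when `z + c • x j₁` has returned to itself and `μ j₂ ^ k` is close to `-1`, the
difference `c • (x j₁ - x j₂)`, small at time `0`, has become close to `(2 * c) • x i`. -/
theorem eventually_exists_pow_apply_near (hx : IsNonisolatedEigenfamily T x μ) (i : ι) {z : X}
    (hz : z ∈ Submodule.span ℂ (Set.range x)) (c : ℂ) {ε : ℝ} (hε : 0 < ε) :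
    ∀ᶠ j₁ in nearbyIndices x μ i, ∀ᶠ j₂ in nearbyIndices x μ i,
      ∃ k, ‖(T ^ k) (z + c • (x j₁ - x j₂)) - (z + (2 * c) • x i)‖ < ε := by
  obtain ⟨r, hr, hrε⟩ := exists_pos_mul_lt (show 0 < ε / 4 by positivity) (‖c‖ * (‖x i‖ + 1))
  have hclose : ∀ᶠ j in nearbyIndices x μ i, ‖c • (x j - x i)‖ < ε / 4 := by
    have hlim := ((tendsto_nearbyIndices x μ i).sub_const (x i)).const_smul c |>.norm
    exact hlim.eventually_lt_const (by simpa using hε)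
  have hbdd : ∀ᶠ j in nearbyIndices x μ i, ‖x j‖ < ‖x i‖ + 1 :=
    (tendsto_nearbyIndices x μ i).norm.eventually_lt_const (lt_add_one _)
  filter_upwards [hclose] with j₁ hj₁
  set v := z + c • x j₁ with hv
  have hspan : v ∈ Submodule.span ℂ (Set.range x) :=
    add_mem hz (Submodule.smul_mem _ c (Submodule.subset_span ⟨j₁, rfl⟩))
  have hreturn : ∀ᶠ k in bohrFilter, ‖(T ^ k) v - v‖ < ε / 4 :=
    ((tendsto_pow_apply_bohrFilter hx.apply_eq_smul hspan).sub_const v).norm.eventually_lt_const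
      (by simpa using hε)
  filter_upwards [hclose, hbdd, (hx.tendsto_eigenvalue i).eventually
    (eventually_exists_mem_norm_pow_add_one_lt hreturn (μ i) hr)] with j₂ hj₂ hbdd₂ hμ₂
  obtain ⟨k, hkv, hkμ⟩ := hμ₂
  have hsmall : ‖c • ((μ j₂ : ℂ) ^ k + 1) • x j₂‖ < ε / 4 := by
    refine lt_of_le_of_lt ?_ hrε
    rw [norm_smul, norm_smul, mul_comm ‖_ + _‖, ← mul_assoc]
    gcongr
  have hsplit : (T ^ k) (z + c • (x j₁ - x j₂)) - (z + (2 * c) • x i) =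
      ((T ^ k) v - v) + c • (x j₁ - x i) - c • ((μ j₂ : ℂ) ^ k + 1) • x j₂ + c • (x j₂ - x i) := by
    rw [hv]
    simp only [map_add, map_sub, map_smul, pow_apply_of_apply_eq_smul (hx.apply_eq_smul j₂)]
    module
  refine ⟨k, ?_⟩
  rw [hsplit]
  grw [norm_add_le, norm_sub_le, norm_add_le]
  linarith [show ‖(T ^ k) v - v‖ < ε / 4 from hkv]

theorem exists_pair_pow_apply_near (hx : IsNonisolatedEigenfamily T x μ) (i : ι) {z : X}
    (hz : z ∈ Submodule.span ℂ (Set.range x)) (c : ℂ) {f : ℕ → ℂ} {a : ℝ}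
    (hf : MeanSquareLE f a) (hfi : BoundedCorrelationNear f (μ i)) {δ ε : ℝ} (hδ : 0 < δ)
    (hε : 0 < ε) :
    ∃ j₁ j₂, (μ j₁ ≠ μ i ∧ ‖x j₁ - x i‖ < ε) ∧ (μ j₂ ≠ μ i ∧ ‖x j₂ - x i‖ < ε) ∧
      MeanSquareLE (fun k => f k + c * ((μ j₁ : ℂ) ^ k - (μ j₂ : ℂ) ^ k)) (a + (4 * ‖c‖ ^ 2 + δ)) ∧
      ∃ k, ‖(T ^ k) (z + c • (x j₁ - x j₂)) - (z + (2 * c) • x i)‖ < ε := by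
  have := hx.nearbyIndices_neBot i
  have hμ : Tendsto μ (nearbyIndices x μ i) (𝓝 (μ i)) :=
    (hx.tendsto_eigenvalue i).mono_right nhdsWithin_le_nhds
  have hnear := (eventually_ne_nearbyIndices x μ i).and
    (eventually_norm_sub_lt_nearbyIndices x μ i hε)
  obtain ⟨j₁, hnear₁, hmean₁, hswap₁⟩ := (hnear.and ((hμ.eventually
    (hf.eventually_add_mul_pow_sub_pow hfi c hδ)).and
      (hx.eventually_exists_pow_apply_near i hz c hε))).exists
  obtain ⟨j₂, hnear₂, hmean₂, hswap₂⟩ := (hnear.and ((hμ.eventually hmean₁).and hswap₁)).exists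
  exact ⟨j₁, j₂, hnear₁, hnear₂, hmean₂, hswap₂⟩

theorem exists_shadowsMultiples_add (hx : IsNonisolatedEigenfamily T x μ) (i : ι) {z p : X}
    (hz : z ∈ Submodule.span ℂ (Set.range x)) (c : ℂ) {f : ℕ → ℂ} {a δ ε r : ℝ}
    (hp : ShadowsMultiples T (Submodule.span ℂ (Set.range x)) (x i) (μ i) a ε p f) (hδ : 0 < δ)
    (hr : 0 < r) :
    ∃ p' f', ShadowsMultiples T (Submodule.span ℂ (Set.range x)) (x i) (μ i)
        (a + (4 * ‖c‖ ^ 2 + δ)) (ε + r) p' f' ∧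
      ∃ k, ‖(T ^ k) (z + p') - (z + p + (2 * c) • x i)‖ < r := by
  obtain ⟨ρ, hρ, hρr⟩ := exists_pos_mul_lt hr (1 + ‖c‖ * 2)
  obtain ⟨j₁, j₂, ⟨hμ₁, hj₁⟩, ⟨hμ₂, hj₂⟩, hmean, k, hk⟩ :=
    hx.exists_pair_pow_apply_near i (add_mem hz hp.mem) c hp.meanSquareLE
      hp.boundedCorrelationNear hδ hρ
  have hcρ : ‖c‖ * (‖x j₁ - x i‖ + ‖x j₂ - x i‖) ≤ ‖c‖ * (ρ + ρ) := by gcongr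
  have hmem : x j₁ - x j₂ ∈ Submodule.span ℂ (Set.range x) :=
    sub_mem (Submodule.subset_span ⟨j₁, rfl⟩) (Submodule.subset_span ⟨j₂, rfl⟩)
  refine ⟨p + c • (x j₁ - x j₂), fun k => f k + c * ((μ j₁ : ℂ) ^ k - (μ j₂ : ℂ) ^ k),
    ⟨add_mem hp.mem (Submodule.smul_mem _ c hmem), ?_, hmean, fun k => ?_⟩, k, ?_⟩
  · exact hp.boundedCorrelationNear.add
      (((boundedCorrelationNear_pow hμ₁).sub (boundedCorrelationNear_pow hμ₂)).const_mul c)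
  · rw [map_add, add_smul, add_sub_add_comm]
    refine (norm_add_le_of_le (hp.norm_pow_apply_sub_smul_le k)
      (norm_pow_apply_smul_sub_le hx.apply_eq_smul c j₁ j₂ (x i) k)).trans ?_
    linarith
  · rw [← add_assoc]
    nlinarith [norm_nonneg c]

/-- Each step adds `2 * c` to the coefficient reached on `x i`, but only `4 * ‖c‖ ^ 2 + δ` to the
mean square of the perturbation. -/
theorem exists_shadowsMultiples (hx : IsNonisolatedEigenfamily T x μ) (i : ι) {z : X}
    (hz : z ∈ Submodule.span ℂ (Set.range x)) (c : ℂ) {δ : ℝ} (hδ : 0 < δ) (n : ℕ) {ε : ℝ}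
    (hε : 0 < ε) :
    ∃ p f, ShadowsMultiples T (Submodule.span ℂ (Set.range x)) (x i) (μ i)
        (n * (4 * ‖c‖ ^ 2 + δ)) ε p f ∧
      ∃ k, ‖(T ^ k) (z + p) - (z + (2 * n * c) • x i)‖ < ε := by
  induction n generalizing ε with
  | zero =>
    exact ⟨0, 0, ⟨zero_mem _, .zero _, fun N => by simp, fun k => by simpa using hε.le⟩,
      0, by simpa using hε⟩
  | succ n ih =>
    obtain ⟨p, f, hp, k₁, hk₁⟩ := ih (half_pos hε)
    set c' := c * ((μ i : ℂ) ^ k₁)⁻¹ with hc'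
    have hnorm : ‖c'‖ = ‖c‖ := by simp [hc', Circle.norm_coe]
    have hrotate : (T ^ k₁) ((2 * c') • x i) = (2 * c) • x i := by
      rw [map_smul, pow_apply_of_apply_eq_smul (hx.apply_eq_smul i), smul_smul, hc', mul_assoc,
        inv_mul_cancel_right₀ (pow_ne_zero _ (μ i).coe_ne_zero)]
    obtain ⟨r, hr, hrε⟩ := exists_pos_mul_lt (half_pos hε) (‖T ^ k₁‖ + 1)
    obtain ⟨p', f', hp', k₂, hk₂⟩ := hx.exists_shadowsMultiples_add i hz c' hp hδ hr
    refine ⟨p', f', ⟨hp'.mem, hp'.boundedCorrelationNear, ?_, fun k => ?_⟩, k₁ + k₂, ?_⟩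
    · simpa only [Nat.cast_succ, add_one_mul, hnorm] using hp'.meanSquareLE
    · refine (hp'.norm_pow_apply_sub_smul_le k).trans ?_
      nlinarith [norm_nonneg (T ^ k₁)]
    · have hcoeff : 2 * ((n + 1 : ℕ) : ℂ) * c = 2 * n * c + 2 * c := by push_cast; ring
      have hTr : ‖T ^ k₁‖ * ‖(T ^ k₂) (z + p') - (z + p + (2 * c') • x i)‖ ≤ ‖T ^ k₁‖ * r := by
        gcongr
      rw [hcoeff, add_smul, ← add_assoc, ← hrotate]
      refine (norm_pow_add_apply_sub_le T _ (z + p) _ _ k₁ k₂).trans_lt ?_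
      linarith

end IsNonisolatedEigenfamily

end Eigenvectors

/-! ### Sparsely attainable displacements -/

section SparselyAttainable

variable {X ι : Type*} [NormedAddCommGroup X] [NormedSpace ℂ X] {T : X →L[ℂ] X} {x : ι → X}
  {μ : ι → Circle}

/-- Every `z ∈ P` has perturbations `z + p` in `P` whose orbits come arbitrarily close to `z + w`,
while the orbit of `p` is small except on a set of times of arbitrarily small density. -/
def IsSparselyAttainable (T : X →L[ℂ] X) (P : Submodule ℂ X) (w : X) : Prop :=
  ∀ z ∈ P, ∀ ε > 0, ∀ η > 0, ∃ p ∈ P,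
    (∃ k, ‖(T ^ k) (z + p) - (z + w)‖ < ε) ∧ UniformDensityLE {k | ε < ‖(T ^ k) p‖} η

theorem ShadowsMultiples.uniformDensityLE {P : Submodule ℂ X} {v p : X} {s : Circle} {a ε t : ℝ}
    {f : ℕ → ℂ} (hp : ShadowsMultiples T P v s a ε p f) (ht : 0 < t) :
    UniformDensityLE {k | ε + t * ‖v‖ < ‖(T ^ k) p‖} (a / t ^ 2) := by
  refine (hp.meanSquareLE.uniformDensityLE ht).mono (fun k hk => ?_) le_rfl
  have htri : ‖(T ^ k) p‖ ≤ ε + ‖f k‖ * ‖v‖ := by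
    rw [← norm_smul]
    exact (norm_le_norm_sub_add _ (f k • v)).trans
      (add_le_add_left (hp.norm_pow_apply_sub_smul_le k) _)
  exact lt_of_mul_lt_mul_right (lt_of_add_lt_add_left (hk.trans_le htri)) (norm_nonneg v)

/-- Cutting `a` into `n` equal parts keeps the sum of the parts fixed while the sum of their squares
tends to `0`. -/
theorem IsNonisolatedEigenfamily.isSparselyAttainable_smul (hx : IsNonisolatedEigenfamily T x μ)
    (i : ι) (a : ℂ) : IsSparselyAttainable T (Submodule.span ℂ (Set.range x)) (a • x i) := by
  intro z hz ε hε η hη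
  have hxi : 0 < ‖x i‖ := norm_pos_iff.2 (hx.ne_zero i)
  set t := ε / 2 / ‖x i‖
  have ht : 0 < t := by positivity
  obtain ⟨n, hn⟩ := exists_nat_gt ((‖a‖ ^ 2 + 1) / (η * t ^ 2))
  have hn0 : (0 : ℝ) < n := lt_of_le_of_lt (by positivity) hn
  have hn0' : (n : ℂ) ≠ 0 := mod_cast hn0.ne'
  obtain ⟨p, f, hp, k, hk⟩ := hx.exists_shadowsMultiples i hz (a / (2 * n))
    (show 0 < 1 / (n : ℝ) ^ 2 by positivity) n (half_pos hε)
  refine ⟨p, hp.mem, ⟨k, ?_⟩, (hp.uniformDensityLE ht).mono (fun k hk => ?_) ?_⟩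
  · rw [mul_div_cancel₀ a (by simpa using hn0')] at hk
    exact hk.trans (half_lt_self hε)
  · rwa [Set.mem_ofPred_eq, div_mul_cancel₀ _ hxi.ne', add_halves]
  · have hsum : n * (4 * ‖a / (2 * n)‖ ^ 2 + 1 / (n : ℝ) ^ 2) = (‖a‖ ^ 2 + 1) / n := by
      simp only [norm_div, norm_mul, Complex.norm_ofNat, Complex.norm_natCast]
      field_simp
      ring
    rw [hsum, div_le_iff₀ (by positivity), div_le_iff₀ hn0]
    rw [div_lt_iff₀ (by positivity)] at hn
    linarith

namespace IsSparselyAttainable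

variable {P : Submodule ℂ X} {v w : X}

theorem zero (T : X →L[ℂ] X) (P : Submodule ℂ X) : IsSparselyAttainable T P 0 :=
  fun z _ ε hε η hη => ⟨0, zero_mem P, ⟨0, by simpa using hε⟩,
    UniformDensityLE.empty.mono (fun k hk => hε.not_gt (by simpa using hk)) hη.le⟩

theorem smul_add {s : Circle} (hv : T v = (s : ℂ) • v)
    (hattain : ∀ a : ℂ, IsSparselyAttainable T P (a • v)) (a : ℂ)
    (hw : IsSparselyAttainable T P w) : IsSparselyAttainable T P (a • v + w) := by
  intro z hz ε hε η hη
  obtain ⟨p₁, hp₁, ⟨k₁, hk₁⟩, hsparse₁⟩ := hw z hz (ε / 2) (half_pos hε) (η / 2) (half_pos hη)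
  obtain ⟨r, hr, hrε⟩ := exists_pos_mul_lt (half_pos hε) (‖T ^ k₁‖ + 1)
  obtain ⟨p₂, hp₂, ⟨k₂, hk₂⟩, hsparse₂⟩ := hattain (a * ((s : ℂ) ^ k₁)⁻¹) (z + p₁)
    (add_mem hz hp₁) r hr (η / 2) (half_pos hη)
  have hrotate : (T ^ k₁) ((a * ((s : ℂ) ^ k₁)⁻¹) • v) = a • v := by
    rw [map_smul, pow_apply_of_apply_eq_smul hv, smul_smul,
      inv_mul_cancel_right₀ (pow_ne_zero _ s.coe_ne_zero)]
  refine ⟨p₁ + p₂, add_mem hp₁ hp₂, ⟨k₁ + k₂, ?_⟩, ?_⟩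
  · have hTr : ‖T ^ k₁‖ * ‖(T ^ k₂) (z + p₁ + p₂) - (z + p₁ + (a * ((s : ℂ) ^ k₁)⁻¹) • v)‖ ≤
        ‖T ^ k₁‖ * r := by gcongr
    rw [add_comm (a • v), ← add_assoc, ← add_assoc, ← hrotate]
    refine (norm_pow_add_apply_sub_le T _ (z + p₁) _ _ k₁ k₂).trans_lt ?_
    linarith
  · refine (hsparse₁.union hsparse₂).mono (fun k hk => ?_) (add_halves η).le
    by_contra hnot
    simp only [Set.mem_union, Set.mem_ofPred_eq, not_or, not_lt] at hnot
    rw [Set.mem_ofPred_eq, map_add] at hk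
    nlinarith [norm_add_le ((T ^ k) p₁) ((T ^ k) p₂), norm_nonneg (T ^ k₁)]

end IsSparselyAttainable

theorem IsNonisolatedEigenfamily.isSparselyAttainable (hx : IsNonisolatedEigenfamily T x μ) {w : X}
    (hw : w ∈ Submodule.span ℂ (Set.range x)) :
    IsSparselyAttainable T (Submodule.span ℂ (Set.range x)) w := by
  obtain ⟨a, rfl⟩ := Finsupp.mem_span_range_iff_exists_finsupp.1 hw
  clear hw
  induction a using Finsupp.induction with
  | zero => simpa using IsSparselyAttainable.zero T _
  | single_add i b a _ _ ih =>
    rw [Finsupp.sum_add_index' (by simp) (by simp [add_smul]), Finsupp.sum_single_index (by simp)]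
    exact ih.smul_add (hx.apply_eq_smul i) (hx.isSparselyAttainable_smul i) b

end SparselyAttainable

/-! ### A criterion for frequent hypercyclicity -/

section Criterion

variable {X : Type*} [NormedAddCommGroup X] [NormedSpace ℂ X] {T : X →L[ℂ] X} {u z : ℕ → X}
  {q : ℕ → ℝ}

/-- The orbit of `z (m + 1)` visits the ball of radius `(1 / 2) ^ m` around `u m` with positive
lower density, and it differs from the orbit of `z m` by more than `(1 / 2) ^ m` only on a set of
density `q m`. The `q m` decrease so fast that all later corrections together destroy at
most half of these visits. -/
structure IsSparseCorrection (T : X →L[ℂ] X) (u z : ℕ → X) (q : ℕ → ℝ) : Prop where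
  pos : ∀ m, 0 < q m
  apply_zero_lt_one : q 0 < 1
  succ_le_half : ∀ m, q (m + 1) ≤ q m / 2
  le_lowerDensity : ∀ m,
    4 * q (m + 1) ≤ lowerDensity {k | dist ((T ^ k) (z (m + 1))) (u m) < (1 / 2) ^ m}
  uniformDensityLE : ∀ m,
    UniformDensityLE {k | (1 / 2) ^ m < dist ((T ^ k) (z (m + 1))) ((T ^ k) (z m))} (q m)

theorem exists_isSparseCorrection {P : Set X} (hP : P.Nonempty)
    (hcorrect : ∀ z ∈ P, ∀ v : X, ∀ ε > 0, ∀ η > 0, ∃ z' ∈ P,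
      0 < lowerDensity {k | dist ((T ^ k) z') v < ε} ∧
      UniformDensityLE {k | ε < dist ((T ^ k) z') ((T ^ k) z)} η) (u : ℕ → X) :
    ∃ z q, IsSparseCorrection T u z q := by
  obtain ⟨z₀, hz₀⟩ := hP
  have hnext (m : ℕ) (σ : {σ : X × ℝ // σ.1 ∈ P ∧ 0 < σ.2}) :
      ∃ σ' : {σ : X × ℝ // σ.1 ∈ P ∧ 0 < σ.2}, σ'.1.2 ≤ σ.1.2 / 2 ∧
        4 * σ'.1.2 ≤ lowerDensity {k | dist ((T ^ k) σ'.1.1) (u m) < (1 / 2) ^ m} ∧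
        UniformDensityLE {k | (1 / 2) ^ m < dist ((T ^ k) σ'.1.1) ((T ^ k) σ.1.1)} σ.1.2 := by
    obtain ⟨⟨z, q⟩, hz, hq⟩ := σ
    obtain ⟨z', hz', hdense, hsparse⟩ := hcorrect z hz (u m) ((1 / 2) ^ m) (by positivity) q hq
    exact ⟨⟨(z', min (q / 2) (_ / 4)), hz', lt_min (half_pos hq) (div_pos hdense four_pos)⟩,
      min_le_left _ _, (le_div_iff₀' four_pos).1 (min_le_right _ _), hsparse⟩
  choose next hhalf hdensity hsparse using hnext
  let σ : ℕ → {σ : X × ℝ // σ.1 ∈ P ∧ 0 < σ.2} := fun m =>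
    Nat.rec ⟨(z₀, 1 / 2), hz₀, one_half_pos⟩ next m
  exact ⟨fun m => (σ m).1.1, fun m => (σ m).1.2, fun m => (σ m).2.2, one_half_lt_one,
    fun m => hhalf m (σ m), fun m => hdensity m (σ m), fun m => hsparse m (σ m)⟩

namespace IsSparseCorrection

theorem le_geometric (hz : IsSparseCorrection T u z q) (m l : ℕ) :
    q (m + l) ≤ q m * (1 / 2) ^ l := by
  induction l with
  | zero => simp
  | succ l ih =>
    calc q (m + l + 1) ≤ q (m + l) / 2 := hz.succ_le_half _
      _ ≤ q m * (1 / 2) ^ l / 2 := by gcongr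
      _ = q m * (1 / 2) ^ (l + 1) := by ring

theorem lt_one (hz : IsSparseCorrection T u z q) (m : ℕ) : q m < 1 := by
  have hle := hz.le_geometric 0 m
  rw [zero_add] at hle
  exact hle.trans_lt (mul_lt_one_of_nonneg_of_lt_one_left (hz.pos 0).le hz.apply_zero_lt_one
    (pow_le_one₀ (by norm_num) (by norm_num)))

theorem cauchySeq (hz : IsSparseCorrection T u z q) : CauchySeq z := by
  refine cauchySeq_of_le_geometric (1 / 2) 1 one_half_lt_one fun m => ?_
  have h0 := (hz.uniformDensityLE m).zero_notMem (hz.lt_one m)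
  simpa [dist_comm] using h0

theorem uniformDensityLE_tail (hz : IsSparseCorrection T u z q) (m : ℕ) :
    UniformDensityLE (⋃ l, {k | (1 / 2) ^ (m + l) <
      dist ((T ^ k) (z (m + l + 1))) ((T ^ k) (z (m + l)))}) (2 * q m) := by
  have hgeom : Summable fun l : ℕ => q m * (1 / 2) ^ l := summable_geometric_two.mul_left _
  have hsum : Summable fun l => q (m + l) :=
    hgeom.of_nonneg_of_le (fun l => (hz.pos _).le) (hz.le_geometric m)
  refine (UniformDensityLE.iUnion (fun l => hz.uniformDensityLE (m + l)) hsum).mono subset_rfl ?_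
  calc ∑' l, q (m + l) ≤ ∑' l : ℕ, q m * (1 / 2) ^ l := hsum.tsum_le_tsum (hz.le_geometric m) hgeom
    _ = 2 * q m := by rw [tsum_mul_left, tsum_geometric_two, mul_comm]

theorem lowerDensity_pos (hz : IsSparseCorrection T u z q) {y : X} (hy : Tendsto z atTop (𝓝 y))
    (m : ℕ) : 0 < lowerDensity {k | dist ((T ^ k) y) (u m) < 2 * (1 / 2) ^ m} := by
  refine lowerDensity_pos_of_subset_union (fun k hk => ?_) (hz.uniformDensityLE_tail (m + 1))
    (lt_of_lt_of_le (by linarith [hz.pos (m + 1)]) (hz.le_lowerDensity m))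
  refine or_iff_not_imp_right.2 fun hgood => ?_
  simp only [Set.mem_iUnion, Set.mem_ofPred_eq, not_exists, not_lt] at hgood
  have htail : Tendsto (fun l => (T ^ k) (z (m + 1 + l))) atTop (𝓝 ((T ^ k) y)) := by
    simpa only [Function.comp_def, add_comm] using
      ((T ^ k).continuous.tendsto y).comp (hy.comp (tendsto_add_atTop_nat (m + 1)))
  have hclose : dist ((T ^ k) (z (m + 1))) ((T ^ k) y) ≤ (1 / 2) ^ m := by
    refine (dist_le_of_le_geometric_of_tendsto₀ (1 / 2) ((1 / 2) ^ (m + 1)) one_half_lt_one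
      (fun l => ?_) htail).trans_eq (by ring)
    rw [dist_comm, ← pow_add]
    exact hgood l
  calc dist ((T ^ k) y) (u m)
      ≤ dist ((T ^ k) (z (m + 1))) ((T ^ k) y) + dist ((T ^ k) (z (m + 1))) (u m) :=
        dist_triangle_left _ _ _
    _ < (1 / 2) ^ m + (1 / 2) ^ m := add_lt_add_of_le_of_lt hclose hk
    _ = 2 * (1 / 2) ^ m := (two_mul _).symm

end IsSparseCorrection

theorem frequentlyHypercyclic_of_forall_exists_correction [CompleteSpace X]
    [TopologicalSpace.SeparableSpace X] {P : Set X} (hP : P.Nonempty)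
    (hcorrect : ∀ z ∈ P, ∀ v : X, ∀ ε > 0, ∀ η > 0, ∃ z' ∈ P,
      0 < lowerDensity {k | dist ((T ^ k) z') v < ε} ∧
      UniformDensityLE {k | ε < dist ((T ^ k) z') ((T ^ k) z)} η) :
    FrequentlyHypercyclic T := by
  set d := TopologicalSpace.denseSeq X
  obtain ⟨z, q, hz⟩ := exists_isSparseCorrection hP hcorrect fun m => d m.unpair.1
  obtain ⟨y, hy⟩ := cauchySeq_tendsto_of_complete hz.cauchySeq
  refine ⟨y, fun U hU hUne => ?_⟩
  obtain ⟨i, hi⟩ := (TopologicalSpace.denseRange_denseSeq X).exists_mem_open hU hUne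
  obtain ⟨r, hr, hrU⟩ := Metric.isOpen_iff.1 hU _ hi
  obtain ⟨j, hj⟩ := exists_pow_lt_of_lt_one (half_pos hr) one_half_lt_one
  have hpos := hz.lowerDensity_pos hy (Nat.pair i j)
  rw [Nat.unpair_pair] at hpos
  refine lowerDensity_pos_of_subset_union (fun k hk => Or.inl (hrU ?_)) .empty hpos
  have hpow : (1 / 2 : ℝ) ^ Nat.pair i j ≤ (1 / 2) ^ j :=
    pow_le_pow_of_le_one (by norm_num) (by norm_num) (Nat.right_le_pair i j)
  exact Metric.mem_ball.2 (lt_trans hk (by linarith))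

end Criterion

/-! ### Dense spans of nonisolated eigenvectors -/

theorem assumptionH'_implies_frequentlyHypercyclic_general {X ι : Type*} [NormedAddCommGroup X]
    [NormedSpace ℂ X] [CompleteSpace X] [TopologicalSpace.SeparableSpace X] {T : X →L[ℂ] X}
    {x : ι → X} {μ : ι → Circle} (hx : IsNonisolatedEigenfamily T x μ)
    (hdense : Dense (Submodule.span ℂ (Set.range x) : Set X)) : FrequentlyHypercyclic T := by
  refine frequentlyHypercyclic_of_forall_exists_correction hdense.nonempty
    fun z hz v ε hε η hη => ?_
  obtain ⟨w, hw, hvw⟩ := hdense.exists_dist_lt v (half_pos hε)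
  obtain ⟨p, hp, ⟨k, hk⟩, hsparse⟩ :=
    hx.isSparselyAttainable (sub_mem hw hz) z hz (ε / 2) (half_pos hε) η hη
  refine ⟨z + p, add_mem hz hp, IsSyndetic.lowerDensity_pos ?_,
    hsparse.mono (fun k hk => ?_) le_rfl⟩
  · rw [add_sub_cancel, ← dist_eq_norm] at hk
    have hkv : (T ^ k) (z + p) ∈ Metric.ball v ε :=
      Metric.mem_ball.2 (by linarith [dist_triangle_right ((T ^ k) (z + p)) v w])
    exact isSyndetic_pow_apply_mem hx.apply_eq_smul (add_mem hz hp) Metric.isOpen_ball hkv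
  · rw [Set.mem_ofPred_eq, map_add, dist_self_add_left] at hk
    exact (half_lt_self hε).trans hk

theorem isNonisolatedEigenfamily_of_closure_eq {X ι : Type*} [NormedAddCommGroup X]
    [NormedSpace ℂ X] {T : X →L[ℂ] X} {x : ι → X} {μ : ι → Circle}
    (heig : ∀ i, T (x i) = (μ i : ℂ) • x i) (hne : ∀ i, x i ≠ 0)
    (hclosure : ∀ F : Set ℂ, F.Finite → F ⊆ {c : ℂ | ‖c‖ = 1 ∧ ∃ v : X, v ≠ 0 ∧ T v = c • v} →
      closure (Set.range x) = closure (x '' {i | (μ i : ℂ) ∉ F})) :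
    IsNonisolatedEigenfamily T x μ where
  apply_eq_smul := heig
  ne_zero := hne
  mem_closure i := by
    have hF := hclosure {(μ i : ℂ)} (Set.finite_singleton _)
      (Set.singleton_subset_iff.2 ⟨(μ i).norm_coe, x i, hne i, heig i⟩)
    simp only [Set.mem_singleton_iff, Circle.coe_inj] at hF
    exact hF ▸ subset_closure ⟨i, rfl⟩

/-- If `T` satisfies assumption (H'): there is a sequence `(x n)` of unit
eigenvectors of `T` with unimodular eigenvalues `lam n`, whose span is dense, and
such that for any finite set `F` of unimodular eigenvalues of `T` the closure of
`{x n : n ≥ 1}` equals the closure of `{x n : lam n ∉ F}`, then `T` is frequently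
hypercyclic. -/
theorem assumptionH'_implies_frequentlyHypercyclic
    {X : Type*} [NormedAddCommGroup X] [NormedSpace ℂ X] [CompleteSpace X]
    [TopologicalSpace.SeparableSpace X] (hdim : ¬ FiniteDimensional ℂ X)
    (T : X →L[ℂ] X) (x : ℕ → X) (lam : ℕ → ℂ)
    (heig : ∀ n, T (x n) = lam n • x n)
    (hmod : ∀ n, ‖lam n‖ = 1) (hnorm : ∀ n, ‖x n‖ = 1)
    (h2 : Dense (Submodule.span ℂ (Set.range x) : Set X))
    (h3 : ∀ F : Set ℂ, F.Finite →
      F ⊆ {c : ℂ | ‖c‖ = 1 ∧ ∃ v : X, v ≠ 0 ∧ T v = c • v} →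
      closure (Set.range x) = closure (x '' {n : ℕ | lam n ∉ F})) :
    FrequentlyHypercyclic T := by
  let μ (n : ℕ) : Circle := ⟨lam n, mem_sphere_zero_iff_norm.2 (hmod n)⟩
  have hne (n : ℕ) : x n ≠ 0 := norm_ne_zero_iff.1 (by simp [hnorm n])
  exact assumptionH'_implies_frequentlyHypercyclic_general
    (isNonisolatedEigenfamily_of_closure_eq (μ := μ) heig hne h3) h2
end

section
/- Let H be a complex separable infinite-dimensional Hilbert space and let T be a bounded linear operator on H. If T has a perfectly spanning set of eigenvectors associated to unimodular eigenvalues, then T is frequently hypercyclic. -/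
open MeasureTheory Filter Topology

/-!
By the ergodic theorem it suffices to realise `T` as a factor of an ergodic system in which every
non-empty open set has positive mass. The system is a rotation of the torus `ι → Circle`, and the
factor map is the random series `ω ↦ ∑ i, ω i • x i`, where the `x i` are eigenvectors with
`∑ i, ‖x i‖ ^ 2 < ∞`: rotating `ω` by the eigenvalues amounts to applying `T` to the sum. In a
Hilbert space the series converges in `L²`, and the rotation is ergodic as soon as the eigenvalues
are multiplicatively independent.

Full support asks that sums `∑ i ∈ s, ω i • x i` over finite sets `s` far out be dense. After
discarding countably many eigenvalues, which the atomless measure does not see, every eigenvector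
`u` is a limit of eigenvectors for uncountably many eigenvalues, so it can be approached by
eigenvectors `y k` with independent eigenvalues. Spreading the mass of `u` over the vectors
`(k + 1)⁻¹ • y k` keeps the squares of the norms summable, while the divergence of the harmonic
series makes all multiples of `u` limits of their tail sums.
-/

section MaximalErgodicTheorem

variable {Ω : Type*} {R : Ω → Ω} {f : Ω → ℝ}

theorem partialSups_birkhoffSum_nonneg (R : Ω → Ω) (f : Ω → ℝ) (N : ℕ) (x : Ω) :
    0 ≤ partialSups (birkhoffSum R f) N x := by
  simpa using le_partialSups_of_le (birkhoffSum R f) N.zero_le x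

theorem partialSups_birkhoffSum_le_of_pos {N : ℕ} {x : Ω}
    (hx : 0 < partialSups (birkhoffSum R f) N x) :
    partialSups (birkhoffSum R f) N x ≤ f x + partialSups (birkhoffSum R f) N (R x) := by
  rw [Pi.partialSups_apply] at hx
  obtain ⟨n, hn, hmax⟩ := exists_partialSups_eq (fun n ↦ birkhoffSum R f n x) N
  rw [Pi.partialSups_apply, hmax]
  cases n with
  | zero => simp [hmax] at hx
  | succ n =>
    rw [birkhoffSum_succ']
    gcongr
    exact le_partialSups_of_le (birkhoffSum R f) (n.le_succ.trans hn) (R x)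

variable [MeasurableSpace Ω] {μ : Measure Ω}

theorem integrable_birkhoffSum (hR : MeasurePreserving R μ μ) (hf : Integrable f μ) (n : ℕ) :
    Integrable (birkhoffSum R f n) μ :=
  integrable_finsetSum _ fun k _ ↦ (hR.iterate k).integrable_comp_of_integrable hf

theorem integrable_partialSups_birkhoffSum (hR : MeasurePreserving R μ μ) (hf : Integrable f μ)
    (N : ℕ) : Integrable (partialSups (birkhoffSum R f) N) μ := by
  induction N with
  | zero => simp
  | succ N ih =>
    rw [partialSups_add_one]
    exact ih.sup (integrable_birkhoffSum hR hf (N + 1))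

theorem setIntegral_partialSups_birkhoffSum_pos_nonneg (hR : MeasurePreserving R μ μ)
    (hf : Integrable f μ) (N : ℕ) :
    0 ≤ ∫ x in {x | 0 < partialSups (birkhoffSum R f) N x}, f x ∂μ := by
  set M := partialSups (birkhoffSum R f) N
  have hM : Integrable M μ := integrable_partialSups_birkhoffSum hR hf N
  have hMR : Integrable (fun x ↦ M (R x)) μ := hR.integrable_comp_of_integrable hM
  have hpos : NullMeasurableSet {x | 0 < M x} μ :=
    nullMeasurableSet_lt aemeasurable_const hM.aemeasurable
  have hle : ∀ x, M x - M (R x) ≤ {x | 0 < M x}.indicator f x := fun x ↦ by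
    by_cases hx : 0 < M x
    · rw [Set.indicator_of_mem (by exact hx), sub_le_iff_le_add]
      exact partialSups_birkhoffSum_le_of_pos hx
    · rw [Set.indicator_of_notMem (by exact hx)]
      linarith [partialSups_birkhoffSum_nonneg R f N (R x)]
  calc (0 : ℝ) = ∫ x, (M x - M (R x)) ∂μ := by
        rw [integral_sub hM hMR, ← integral_map hR.aemeasurable (hR.map_eq.symm ▸ hM.1), hR.map_eq,
          sub_self]
    _ ≤ ∫ x, {x | 0 < M x}.indicator f x ∂μ :=
        integral_mono (hM.sub hMR) (hf.indicator₀ hpos) hle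
    _ = ∫ x in {x | 0 < M x}, f x ∂μ := integral_indicator₀ hpos

/-- The maximal ergodic theorem of Hopf. -/
theorem setIntegral_exists_birkhoffSum_pos_nonneg (hR : MeasurePreserving R μ μ)
    (hf : Integrable f μ) : 0 ≤ ∫ x in {x | ∃ n, 0 < birkhoffSum R f n x}, f x ∂μ := by
  let E : ℕ → Set Ω := fun N ↦ {x | 0 < partialSups (birkhoffSum R f) N x}
  have hE : {x | ∃ n, 0 < birkhoffSum R f n x} = ⋃ N, E N := by
    ext x
    simp only [E, Set.mem_ofPred_eq, Set.mem_iUnion]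
    constructor
    · rintro ⟨n, hn⟩
      exact ⟨n, hn.trans_le (le_partialSups (birkhoffSum R f) n x)⟩
    · rintro ⟨N, hN⟩
      obtain ⟨n, -, hmax⟩ := exists_partialSups_eq (fun n ↦ birkhoffSum R f n x) N
      rw [Pi.partialSups_apply, hmax] at hN
      exact ⟨n, hN⟩
  have hmono : Monotone E := fun _ _ hNM x hx ↦
    hx.trans_le ((partialSups (birkhoffSum R f)).monotone hNM x)
  have hmeas : ∀ N, NullMeasurableSet (E N) μ := fun N ↦
    nullMeasurableSet_lt aemeasurable_const
      (integrable_partialSups_birkhoffSum hR hf N).aemeasurable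
  rw [hE]
  exact ge_of_tendsto' (tendsto_setIntegral_of_monotone₀ hmeas hmono hf.integrableOn)
    (setIntegral_partialSups_birkhoffSum_pos_nonneg hR hf)

end MaximalErgodicTheorem

section LiminfBirkhoffAverage

variable {Ω : Type*} {R : Ω → Ω} {g : Ω → ℝ}

theorem abs_birkhoffAverage_le {C : ℝ} (hg : ∀ x, |g x| ≤ C) (N : ℕ) (x : Ω) :
    |birkhoffAverage ℝ R g N x| ≤ C := by
  have hC : 0 ≤ C := (abs_nonneg _).trans (hg x)
  have hsum : |birkhoffSum R g N x| ≤ N * C := by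
    simpa [birkhoffSum] using (Finset.abs_sum_le_sum_abs _ _).trans
      (Finset.sum_le_sum fun k (_ : k ∈ Finset.range N) ↦ hg (R^[k] x))
  rw [birkhoffAverage, smul_eq_mul, abs_mul, abs_of_nonneg (by positivity)]
  exact inv_mul_le_of_le_mul₀ (Nat.cast_nonneg N) hC hsum

theorem liminf_birkhoffAverage_apply_le {C : ℝ} (hg : ∀ x, |g x| ≤ C) (x : Ω) :
    liminf (birkhoffAverage ℝ R g · (R x)) atTop ≤ liminf (birkhoffAverage ℝ R g · x) atTop := by
  have hbdd : Bornology.IsBounded (Set.range g) :=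
    isBounded_iff_forall_norm_le.2 ⟨C, Set.forall_mem_range.2 hg⟩
  have hdiff := tendsto_birkhoffAverage_apply_sub_birkhoffAverage' ℝ hbdd R x
  have habove : IsBoundedUnder (· ≤ ·) atTop (birkhoffAverage ℝ R g · x) :=
    isBoundedUnder_of ⟨C, fun N ↦ (abs_le.1 (abs_birkhoffAverage_le hg N x)).2⟩
  have hbelow : IsBoundedUnder (· ≥ ·) atTop (birkhoffAverage ℝ R g · x) :=
    isBoundedUnder_of ⟨-C, fun N ↦ (abs_le.1 (abs_birkhoffAverage_le hg N x)).1⟩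
  have hle := liminf_add_le hdiff.isBoundedUnder_ge hdiff.isBoundedUnder_le hbelow
    habove.isCoboundedUnder_ge
  simpa only [hdiff.limsup_eq, zero_add, Pi.add_def, sub_add_cancel] using hle

variable [MeasurableSpace Ω] {μ : Measure Ω} [IsProbabilityMeasure μ]

theorem integral_le_of_ae_exists_birkhoffSum_lt (hR : MeasurePreserving R μ μ)
    (hg : Integrable g μ) {c : ℝ} (h : ∀ᵐ x ∂μ, ∃ n : ℕ, birkhoffSum R g n x < n * c) :
    ∫ x, g x ∂μ ≤ c := by
  let f : Ω → ℝ := fun x ↦ c - g x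
  have hsum (n : ℕ) (x : Ω) : birkhoffSum R f n x = n * c - birkhoffSum R g n x := by
    simp [f, birkhoffSum, Finset.sum_sub_distrib]
  have huniv : {x | ∃ n, 0 < birkhoffSum R f n x} =ᵐ[μ] Set.univ := by
    simpa only [hsum, sub_pos] using eventuallyEq_univ.2 h
  have hf : Integrable f μ := (integrable_const c).sub hg
  have hmax := setIntegral_exists_birkhoffSum_pos_nonneg hR hf
  rw [setIntegral_congr_set huniv, setIntegral_univ, integral_sub (integrable_const c) hg] at hmax
  simpa using hmax

theorem ae_integral_le_liminf_birkhoffAverage (hR : Ergodic R μ) (hg : Measurable g) {C : ℝ}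
    (hgC : ∀ x, |g x| ≤ C) :
    ∀ᵐ x ∂μ, ∫ y, g y ∂μ ≤ liminf (birkhoffAverage ℝ R g · x) atTop := by
  have hmeas : Measurable fun x ↦ liminf (birkhoffAverage ℝ R g · x) atTop :=
    .liminf fun n ↦ measurable_const.mul <| Finset.measurable_sum _ fun k _ ↦
      hg.comp (hR.measurable.iterate k)
  have hint : Integrable g μ := .of_bound hg.aestronglyMeasurable C (ae_of_all _ hgC)
  suffices ∀ c : ℚ, c < ∫ y, g y ∂μ →
      ∀ᵐ x ∂μ, c ≤ liminf (birkhoffAverage ℝ R g · x) atTop by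
    filter_upwards [ae_all_iff.2 fun c ↦ eventually_imp_distrib_left.2 (this c)] with x hx
    exact le_of_forall_rat_lt_imp_le hx
  intro c hc
  let E : Set Ω := {x | liminf (birkhoffAverage ℝ R g · x) atTop < c}
  have hE : E ≤ᵐ[μ] R ⁻¹' E :=
    .of_forall fun x hx ↦ (liminf_birkhoffAverage_apply_le hgC x).trans_lt hx
  rcases hR.ae_empty_or_univ_of_ae_le_preimage
    (measurableSet_lt hmeas measurable_const).nullMeasurableSet hE with hempty | huniv
  · filter_upwards [eventuallyEq_empty.1 hempty] with x hx using not_lt.1 hx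
  · refine absurd (integral_le_of_ae_exists_birkhoffSum_lt hR.toMeasurePreserving hint ?_) hc.not_ge
    filter_upwards [eventuallyEq_univ.1 huniv] with x hx
    have habove : IsBoundedUnder (· ≤ ·) atTop (birkhoffAverage ℝ R g · x) :=
      isBoundedUnder_of ⟨C, fun N ↦ (abs_le.1 (abs_birkhoffAverage_le hgC N x)).2⟩
    have hfreq := frequently_lt_of_liminf_lt habove.isCoboundedUnder_ge hx
    obtain ⟨n, hlt, hn⟩ := (hfreq.and_eventually (eventually_gt_atTop 0)).exists
    refine ⟨n, ?_⟩
    rwa [birkhoffAverage, smul_eq_mul, inv_mul_lt_iff₀ (by positivity)] at hlt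

end LiminfBirkhoffAverage

section LowerDensity

theorem lowerDensity_mono {A B : Set ℕ} (h : A ⊆ B) : lowerDensity A ≤ lowerDensity B := by
  classical
  refine liminf_le_liminf (.of_forall fun N ↦ by gcongr)
    (isBoundedUnder_of ⟨0, fun N ↦ by positivity⟩)
    (IsBoundedUnder.isCoboundedUnder_ge (isBoundedUnder_of ⟨1, fun N ↦ ?_⟩))
  refine div_le_one_of_le₀ ?_ (Nat.cast_nonneg N)
  simpa using Finset.card_filter_le (Finset.range N) (· ∈ B)

theorem lowerDensity_setOf_iterate_mem {Ω : Type*} (R : Ω → Ω) (W : Set Ω) (x : Ω) :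
    lowerDensity {n | R^[n] x ∈ W} =
      liminf (birkhoffAverage ℝ R (W.indicator 1) · x) atTop := by
  classical
  refine congrArg (liminf · atTop) (funext fun N ↦ ?_)
  simp [birkhoffAverage, birkhoffSum, Set.indicator_apply, div_eq_inv_mul]

theorem ae_measureReal_le_lowerDensity {Ω : Type*} [MeasurableSpace Ω] {μ : Measure Ω}
    [IsProbabilityMeasure μ] {R : Ω → Ω} (hR : Ergodic R μ) {W : Set Ω} (hW : MeasurableSet W) :
    ∀ᵐ x ∂μ, μ.real W ≤ lowerDensity {n | R^[n] x ∈ W} := by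
  simp only [lowerDensity_setOf_iterate_mem, ← integral_indicator_one hW]
  refine ae_integral_le_liminf_birkhoffAverage hR (measurable_one.indicator hW) (C := 1) fun x ↦ ?_
  by_cases hx : x ∈ W <;> simp [hx]

theorem frequentlyHypercyclic_of_ergodic_factor {X : Type*} [NormedAddCommGroup X]
    [NormedSpace ℂ X] [SecondCountableTopology X] [MeasurableSpace X] [OpensMeasurableSpace X]
    {T : X →L[ℂ] X} {Ω : Type*} [MeasurableSpace Ω] {μ : Measure Ω} [IsProbabilityMeasure μ]
    {R : Ω → Ω} (hR : Ergodic R μ) {ξ : Ω → X} (hξ : Measurable ξ)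
    (hcomm : ∀ᵐ ω ∂μ, ξ (R ω) = T (ξ ω))
    (hpos : ∀ U : Set X, IsOpen U → U.Nonempty → 0 < μ (ξ ⁻¹' U)) :
    FrequentlyHypercyclic T := by
  have horbit : ∀ᵐ ω ∂μ, ∀ n : ℕ, ξ (R^[n] ω) = (T ^ n) (ξ ω) := by
    have hcomm' (n : ℕ) : ∀ᵐ ω ∂μ, ξ (R (R^[n] ω)) = T (ξ (R^[n] ω)) :=
      (hR.toMeasurePreserving.iterate n).quasiMeasurePreserving.ae hcomm
    filter_upwards [ae_all_iff.2 hcomm'] with ω hω n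
    induction n with
    | zero => rfl
    | succ n ih => rw [Function.iterate_succ_apply', hω, ih, pow_succ', mul_apply_eq_comp]
  have hvisits : ∀ᵐ ω ∂μ, ∀ V ∈ TopologicalSpace.countableBasis X,
      μ.real (ξ ⁻¹' V) ≤ lowerDensity {n | R^[n] ω ∈ ξ ⁻¹' V} :=
    (ae_ball_iff (TopologicalSpace.countable_countableBasis X)).2 fun V hV ↦
      ae_measureReal_le_lowerDensity hR
        (hξ (TopologicalSpace.isOpen_of_mem_countableBasis hV).measurableSet)
  obtain ⟨ω, horbit, hvisits⟩ := (horbit.and hvisits).exists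
  refine ⟨ξ ω, fun U hU ⟨u, hu⟩ ↦ ?_⟩
  obtain ⟨V, hV, huV, hVU⟩ :=
    (TopologicalSpace.isBasis_countableBasis X).exists_subset_of_mem_open hu hU
  calc 0 < μ.real (ξ ⁻¹' V) :=
        ENNReal.toReal_pos (hpos V (TopologicalSpace.isOpen_of_mem_countableBasis hV)
          ⟨u, huV⟩).ne' (measure_ne_top _ _)
    _ ≤ lowerDensity {n | R^[n] ω ∈ ξ ⁻¹' V} := hvisits V hV
    _ ≤ lowerDensity {n | (T ^ n) (ξ ω) ∈ U} :=
        lowerDensity_mono fun n hn ↦ hVU (horbit n ▸ hn)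

end LowerDensity

section CharacterIntegrals

noncomputable instance circleMeasurableSpace : MeasurableSpace Circle := borel Circle

instance circleBorelSpace : BorelSpace Circle := ⟨rfl⟩

instance circlePolishSpace : PolishSpace Circle := inferInstance

variable {G : Type*} [Monoid G] [TopologicalSpace G]

/-- Continuous circle-valued characters, as a homomorphism into the multiplicative monoid of bounded
continuous complex functions. -/
noncomputable def characterBCF :
    (G →ₜ* Circle) →* BoundedContinuousFunction G ℂ where
  toFun χ := .ofNormedAddCommGroup (fun a ↦ (χ a : ℂ))
    (by fun_prop) 1 fun a ↦ (Circle.norm_coe (χ a)).le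
  map_one' := by ext; simp
  map_mul' χ ψ := by ext; simp

theorem star_characterBCF (χ : G →ₜ* Circle) :
    star (characterBCF χ) = characterBCF χ⁻¹ := by
  ext a
  exact (Circle.coe_inv_eq_conj (χ a)).symm

theorem starAlgebra_adjoin_characterBCF (Γ : Subgroup (G →ₜ* Circle)) :
    Subalgebra.toSubmodule (StarAlgebra.adjoin ℂ (characterBCF '' SetLike.coe Γ)).toSubalgebra =
      Submodule.span ℂ (characterBCF '' SetLike.coe Γ) := by
  have hstar : star (characterBCF '' SetLike.coe Γ) ⊆ characterBCF '' SetLike.coe Γ := by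
    rintro f ⟨χ, hχ, hf⟩
    exact ⟨χ⁻¹, Γ.inv_mem hχ, by rw [← star_characterBCF, hf, star_star]⟩
  have hclosure : (Submonoid.closure (characterBCF '' SetLike.coe Γ) : Set _) =
      characterBCF '' SetLike.coe Γ := by
    rw [← Subgroup.coe_toSubmonoid, ← Submonoid.coe_map, Submonoid.closure_eq]
  rw [StarAlgebra.adjoin_toSubalgebra, Algebra.adjoin_eq_span,
    Set.union_eq_self_of_subset_right hstar, hclosure]

variable [MeasurableSpace G] [BorelSpace G]

theorem measure_ext_of_forall_integral_character_eq [PolishSpace G]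
    {P Q : Measure G} [IsFiniteMeasure P] [IsFiniteMeasure Q] {Γ : Subgroup (G →ₜ* Circle)}
    (hsep : ∀ a b : G, a ≠ b → ∃ χ ∈ Γ, χ a ≠ χ b)
    (h : ∀ χ ∈ Γ, ∫ a, (χ a : ℂ) ∂P = ∫ a, (χ a : ℂ) ∂Q) : P = Q := by
  refine ext_of_forall_mem_subalgebra_integral_eq_of_polish (𝕜 := ℂ)
    (A := StarAlgebra.adjoin ℂ (characterBCF '' SetLike.coe Γ)) ?_ ?_
  · intro a b hab
    obtain ⟨χ, hχ, hne⟩ := hsep a b hab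
    exact ⟨characterBCF χ, ⟨(characterBCF χ).toContinuousMap, ⟨characterBCF χ,
      StarAlgebra.subset_adjoin ℂ _ ⟨χ, hχ, rfl⟩, rfl⟩, rfl⟩, fun heq ↦ hne (Circle.ext heq)⟩
  · intro f hf
    have hspan : f ∈ Submodule.span ℂ (characterBCF '' SetLike.coe Γ) :=
      starAlgebra_adjoin_characterBCF Γ ▸ hf
    clear hf
    induction hspan using Submodule.span_induction with
    | mem f hf =>
      obtain ⟨χ, hχ, rfl⟩ := hf
      exact h χ hχ
    | zero => simp
    | add f₁ f₂ _ _ h₁ h₂ =>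
      simp only [BoundedContinuousFunction.coe_add, Pi.add_apply]
      rw [integral_add (f₁.integrable P) (f₂.integrable P),
        integral_add (f₁.integrable Q) (f₂.integrable Q), h₁, h₂]
    | smul c f _ hf =>
      simp only [BoundedContinuousFunction.coe_smul, integral_smul, hf]

theorem integral_character_eq_zero [ContinuousMul G] {P : Measure G} {g : G}
    (hP : MeasurePreserving (g * ·) P P) {χ : G →ₜ* Circle} (hχ : χ g ≠ 1) :
    ∫ a, (χ a : ℂ) ∂P = 0 := by
  have hcont : Continuous fun a ↦ (χ a : ℂ) := by fun_prop
  have heq : ∫ a, (χ a : ℂ) ∂P = χ g * ∫ a, (χ a : ℂ) ∂P := by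
    calc ∫ a, (χ a : ℂ) ∂P = ∫ a, (χ (g * a) : ℂ) ∂P := by
          rw [← integral_map hP.aemeasurable hcont.aestronglyMeasurable, hP.map_eq]
      _ = χ g * ∫ a, (χ a : ℂ) ∂P := by
          simp only [map_mul, Circle.coe_mul, integral_const_mul]
  by_contra hne
  exact hχ (Circle.ext (mul_right_cancel₀ hne (by simpa using heq.symm)))

theorem ergodic_mul_left_of_forall_character [ContinuousMul G] [PolishSpace G]
    {Γ : Subgroup (G →ₜ* Circle)} (hsep : ∀ a b : G, a ≠ b → ∃ χ ∈ Γ, χ a ≠ χ b) {g : G}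
    (hg : ∀ χ ∈ Γ, χ g = 1 → χ = 1) {μ : Measure G} [IsProbabilityMeasure μ]
    (hμ : MeasurePreserving (g * ·) μ μ) : Ergodic (g * ·) μ := by
  have hunique : {ν | MeasurePreserving (g * ·) ν ν ∧ IsProbabilityMeasure ν} = {μ} := by
    refine Set.eq_singleton_iff_unique_mem.2 ⟨⟨hμ, inferInstance⟩, fun ν ⟨hν, _⟩ ↦ ?_⟩
    refine measure_ext_of_forall_integral_character_eq hsep fun χ hχ ↦ ?_
    by_cases h1 : χ g = 1
    · simp [hg χ hχ h1]
    · rw [integral_character_eq_zero hν h1, integral_character_eq_zero hμ h1]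
  exact .of_mem_extremePoints (by rw [hunique, extremePoints_singleton]; rfl)

end CharacterIntegrals

section Torus

variable {ι : Type*}

/-- The coordinate characters of the torus. -/
noncomputable def coordCharacter (i : ι) : (ι → Circle) →ₜ* Circle where
  toMonoidHom := Pi.evalMonoidHom _ i
  continuous_toFun := continuous_apply i

theorem ergodic_mul_left_of_linearIndependent [Countable ι] {c : ι → Circle}
    (hc : LinearIndependent ℤ fun i ↦ Additive.ofMul (c i)) {μ : Measure (ι → Circle)}
    [IsProbabilityMeasure μ] [μ.IsMulLeftInvariant] : Ergodic (c * ·) μ := by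
  refine ergodic_mul_left_of_forall_character (Γ := .closure (Set.range coordCharacter))
    (fun a b hab ↦ ?_) (fun χ hχ h1 ↦ ?_) (measurePreserving_mul_left μ c)
  · obtain ⟨i, hi⟩ := Function.ne_iff.1 hab
    exact ⟨coordCharacter i, Subgroup.subset_closure ⟨i, rfl⟩, hi⟩
  · obtain ⟨a, rfl⟩ := Subgroup.mem_closure_range_iff.1 hχ
    suffices a = 0 by simp [this]
    refine linearIndependent_iff.1 hc a (Additive.toMul.injective ?_)
    let evalAt : ((ι → Circle) →ₜ* Circle) →* Circle :=
      { toFun := fun χ ↦ χ c, map_one' := rfl, map_mul' := fun _ _ ↦ rfl }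
    calc (Finsupp.linearCombination ℤ (fun i ↦ Additive.ofMul (c i)) a).toMul
        = a.prod fun i n ↦ c i ^ n := rfl
      _ = evalAt (a.prod fun i n ↦ coordCharacter i ^ n) := by
          simp only [map_finsuppProd, map_zpow]
          rfl
      _ = 1 := h1

end Torus

section IndependentChoice

variable {R M ι : Type*} [Ring R] [AddCommGroup M] [Module R M]

theorem linearIndependent_of_smul_notMem_span_Iio [LinearOrder ι] {c : ι → M}
    (hc : ∀ i, ∀ r : R, r • c i ∈ Submodule.span R (c '' Set.Iio i) → r = 0) :
    LinearIndependent R c := by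
  refine linearIndependent_iff_finset_linearIndependent.2 fun s ↦ ?_
  change LinearIndepOn R c (s : Set ι)
  induction s using Finset.induction_on_max with
  | empty => simp
  | insert i s hi ih =>
    rw [Finset.coe_insert]
    exact ih.insert' fun r hr ↦ hc i r (Submodule.span_mono (Set.image_mono hi) hr)

variable [Countable R]

theorem countable_span {S : Set M} (hS : S.Countable) :
    (Submodule.span R S : Set M).Countable := by
  have := hS.to_subtype
  rw [← Subtype.range_coe (s := S), ← Finsupp.range_linearCombination]
  exact Set.countable_range _

theorem countable_setOf_smul_mem_span (hR : ∀ r : R, r ≠ 0 → {x : M | r • x = 0}.Countable)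
    {S : Set M} (hS : S.Countable) :
    {x : M | ∃ r : R, r ≠ 0 ∧ r • x ∈ Submodule.span R S}.Countable := by
  have hfiber (r : R) (hr : r ≠ 0) (m : M) : {x : M | r • x = m}.Countable := by
    rcases Set.eq_empty_or_nonempty {x : M | r • x = m} with hempty | ⟨x₀, rfl⟩
    · simp [hempty]
    · refine ((hR r hr).image (x₀ + ·)).mono ?_
      intro x hx
      exact ⟨x - x₀, (smul_sub r x x₀).trans (sub_eq_zero.2 hx), add_sub_cancel x₀ x⟩
  refine ((Set.to_countable {r : R | r ≠ 0}).biUnion fun r hr ↦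
    (countable_span (R := R) hS).biUnion fun m _ ↦ hfiber r hr m).mono ?_
  rintro x ⟨r, hr, hx⟩
  exact Set.mem_biUnion hr (Set.mem_biUnion hx rfl)

theorem exists_linearIndependent_mem [Countable ι]
    (hR : ∀ r : R, r ≠ 0 → {x : M | r • x = 0}.Countable) {A : ι → Set M}
    (hA : ∀ i, ¬ (A i).Countable) : ∃ c : ι → M, (∀ i, c i ∈ A i) ∧ LinearIndependent R c := by
  obtain ⟨_, _⟩ := exists_wellFoundedLT ι
  have hstep (i : ι) (b : Set.Iio i → M) :
      ∃ x ∈ A i, ∀ r : R, r • x ∈ Submodule.span R (Set.range b) → r = 0 := by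
    obtain ⟨x, hxA, hx⟩ := Set.not_subset.1 fun h ↦
      hA i ((countable_setOf_smul_mem_span hR (Set.countable_range b)).mono h)
    exact ⟨x, hxA, fun r hr ↦ by_contra fun hr0 ↦ hx ⟨r, hr0, hr⟩⟩
  choose next hnextA hnext using hstep
  let c : ι → M := wellFounded_lt.fix fun i b ↦ next i fun j ↦ b j j.2
  have hc (i : ι) : c i = next i fun j ↦ c j := wellFounded_lt.fix_eq _ i
  refine ⟨c, fun i ↦ hc i ▸ hnextA i _, linearIndependent_of_smul_notMem_span_Iio fun i r hr ↦ ?_⟩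
  rw [hc i, Set.image_eq_range] at hr
  exact hnext i _ r hr

end IndependentChoice

theorem finite_setOf_circle_zpow_eq_one {r : ℤ} (hr : r ≠ 0) :
    {z : Circle | z ^ r = 1}.Finite := by
  refine .of_finite_image (f := fun z : Circle ↦ (z : ℂ))
    ((Polynomial.nthRoots r.natAbs (1 : ℂ)).finite_toSet.subset ?_) Circle.coe_injective.injOn
  rintro _ ⟨z, hz, rfl⟩
  refine (Polynomial.mem_nthRoots (Int.natAbs_pos.2 hr)).2 ?_
  rw [← Circle.coe_pow, pow_natAbs_eq_one.2 hz, Circle.coe_one]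

theorem exists_circle_linearIndependent {ι : Type*} [Countable ι] {A : ι → Set Circle}
    (hA : ∀ i, ¬ (A i).Countable) :
    ∃ c : ι → Circle, (∀ i, c i ∈ A i) ∧ LinearIndependent ℤ fun i ↦ Additive.ofMul (c i) :=
  exists_linearIndependent_mem (M := Additive Circle)
    (fun _ hr ↦ (finite_setOf_circle_zpow_eq_one hr).countable) hA

section DivergentSeries

theorem exists_tendsto_sum_Ico {a : ℕ → ℝ} (ha : ∀ k, 0 ≤ a k) (ha0 : Tendsto a atTop (𝓝 0))
    (hdiv : ¬ Summable a) {t : ℝ} (ht : 0 ≤ t) :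
    ∃ n : ℕ → ℕ, Tendsto (fun K ↦ ∑ k ∈ Finset.Ico K (n K), a k) atTop (𝓝 t) := by
  classical
  have hreach (K : ℕ) : ∃ n, t ≤ ∑ k ∈ Finset.Ico K n, a k := by
    have htop := (not_summable_iff_tendsto_nat_atTop_of_nonneg ha).1 hdiv
    obtain ⟨n, hn, hKn⟩ := ((htop.eventually_ge_atTop (∑ k ∈ Finset.range K, a k + t)).and
      (eventually_ge_atTop K)).exists
    exact ⟨n, by rw [Finset.sum_Ico_eq_sub _ hKn]; linarith⟩
  refine ⟨fun K ↦ Nat.find (hreach K), Metric.tendsto_atTop.2 fun ε hε ↦ ?_⟩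
  obtain ⟨K₀, hK₀⟩ := eventually_atTop.1 (ha0.eventually_lt_const hε)
  refine ⟨K₀, fun K hK ↦ ?_⟩
  have hge := Nat.find_spec (hreach K)
  rw [Real.dist_eq, abs_of_nonneg (sub_nonneg.2 hge), sub_lt_iff_lt_add']
  rcases le_or_gt (Nat.find (hreach K)) K with hn | hn
  · rw [Finset.Ico_eq_empty_of_le hn]
    simpa using by linarith
  · obtain ⟨m, hm⟩ := Nat.exists_eq_add_one_of_ne_zero (Nat.ne_zero_of_lt hn)
    have hlt := not_le.1 (Nat.find_min (hreach K) (hm ▸ m.lt_add_one))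
    rw [hm] at hn ⊢
    have hKm := Nat.lt_succ_iff.1 hn
    rw [Finset.sum_Ico_succ_top hKm]
    exact add_lt_add hlt (hK₀ m (hK.trans hKm))

theorem exists_tendsto_sum_Ico_smul {E : Type*} [NormedAddCommGroup E] [NormedSpace ℝ E]
    {a : ℕ → ℝ} (ha : ∀ k, 0 ≤ a k) (ha0 : Tendsto a atTop (𝓝 0)) (hdiv : ¬ Summable a)
    {y : ℕ → E} {u : E} (hy : Tendsto y atTop (𝓝 u)) {t : ℝ} (ht : 0 ≤ t) :
    ∃ n : ℕ → ℕ, Tendsto (fun K ↦ ∑ k ∈ Finset.Ico K (n K), a k • y k) atTop (𝓝 (t • u)) := by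
  obtain ⟨n, hn⟩ := exists_tendsto_sum_Ico ha ha0 hdiv ht
  have herror : (fun K ↦ ∑ k ∈ Finset.Ico K (n K), a k • (y k - u)) =o[atTop]
      fun K ↦ ∑ k ∈ Finset.Ico K (n K), a k := by
    refine Asymptotics.isLittleO_iff.2 fun ε hε ↦ ?_
    obtain ⟨K₀, hK₀⟩ := Metric.tendsto_atTop.1 hy ε hε
    filter_upwards [eventually_ge_atTop K₀] with K hK
    rw [Real.norm_of_nonneg (Finset.sum_nonneg fun k _ ↦ ha k), Finset.mul_sum]
    refine norm_sum_le_of_le _ fun k hk ↦ ?_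
    rw [norm_smul, Real.norm_of_nonneg (ha k), mul_comm, ← dist_eq_norm]
    have := hK₀ k (hK.trans (Finset.mem_Ico.1 hk).1)
    gcongr
    exact ha k
  refine ⟨n, ?_⟩
  have hlim := ((Asymptotics.isLittleO_one_iff ℝ).1 (herror.trans_isBigO (hn.isBigO_one ℝ))).add
    (hn.smul_const u)
  rw [zero_add] at hlim
  refine hlim.congr fun K ↦ ?_
  rw [Finset.sum_smul, ← Finset.sum_add_distrib]
  exact Finset.sum_congr rfl fun k _ ↦ by rw [← smul_add, sub_add_cancel]

end DivergentSeries

section UnimodularSums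

variable {ι H : Type*} [NormedAddCommGroup H] [NormedSpace ℂ H] {x : ι → H}

theorem continuous_sum_circle_smul (x : ι → H) (s : Finset ι) :
    Continuous fun ω : ι → Circle ↦ ∑ i ∈ s, (ω i : ℂ) • x i := by
  fun_prop

theorem dependsOn_sum_circle_smul (x : ι → H) (s : Finset ι) :
    DependsOn (fun ω : ι → Circle ↦ ∑ i ∈ s, (ω i : ℂ) • x i) (s : Set ι) :=
  fun _ _ h ↦ Finset.sum_congr rfl fun i hi ↦ by rw [h i hi]

/-- The finite sums `∑ i ∈ s, ω i • x i` with coefficients on the unit circle and `s` disjoint from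
`s₀`. -/
def unimodularSums (x : ι → H) (s₀ : Finset ι) : Set H :=
  {v | ∃ s, Disjoint s₀ s ∧ ∃ ω : ι → Circle, ∑ i ∈ s, (ω i : ℂ) • x i = v}

theorem exists_norm_sum_circle_smul_sub_lt {s₀ : Finset ι} (hx : Dense (unimodularSums x s₀))
    (p : H) {ε : ℝ} (hε : 0 < ε) :
    ∃ s, s₀ ⊆ s ∧ ∃ ω : ι → Circle, ‖∑ i ∈ s, (ω i : ℂ) • x i - p‖ < ε := by
  classical
  obtain ⟨_, ⟨s, hs, ω, rfl⟩, hω⟩ := Metric.dense_iff.1 hx (p - ∑ i ∈ s₀, x i) ε hε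
    |>.imp fun _ h ↦ h.symm
  refine ⟨s₀ ∪ s, Finset.subset_union_left, s.piecewise ω 1, ?_⟩
  have hs₀ : ∑ i ∈ s₀, ((s.piecewise ω 1 i : Circle) : ℂ) • x i = ∑ i ∈ s₀, x i :=
    Finset.sum_congr rfl fun i hi ↦ by simp [Finset.disjoint_left.1 hs hi]
  have hs' : ∑ i ∈ s, ((s.piecewise ω 1 i : Circle) : ℂ) • x i = ∑ i ∈ s, (ω i : ℂ) • x i :=
    Finset.sum_congr rfl fun i hi ↦ by simp [hi]
  rw [Finset.sum_union hs, hs₀, hs', add_comm, ← sub_sub_eq_add_sub, ← dist_eq_norm]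
  exact hω

theorem zero_mem_unimodularSums (x : ι → H) (s₀ : Finset ι) : 0 ∈ unimodularSums x s₀ :=
  ⟨∅, Finset.disjoint_empty_right s₀, 1, Finset.sum_empty⟩

theorem add_mem_unimodularSums [DecidableEq ι] {s₀ s : Finset ι} (hs : Disjoint s₀ s)
    (ω : ι → Circle) {v : H} (hv : v ∈ unimodularSums x (s₀ ∪ s)) :
    ∑ i ∈ s, (ω i : ℂ) • x i + v ∈ unimodularSums x s₀ := by
  obtain ⟨t, ht, η, rfl⟩ := hv
  obtain ⟨hs₀t, hst⟩ := Finset.disjoint_union_left.1 ht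
  refine ⟨s ∪ t, Finset.disjoint_union_right.2 ⟨hs, hs₀t⟩, s.piecewise ω η, ?_⟩
  rw [Finset.sum_union hst]
  congr 1
  · exact Finset.sum_congr rfl fun i hi ↦ by simp [hi]
  · exact Finset.sum_congr rfl fun i hi ↦ by simp [Finset.disjoint_right.1 hst hi]

/-- The vectors which are limits of finite sums `∑ i ∈ s, ω i • x i`, with coefficients on the unit
circle, along index sets `s` avoiding any prescribed finite set. -/
def tailUnimodularSums (x : ι → H) : AddSubmonoid H where
  carrier := ⋂ s₀, closure (unimodularSums x s₀)
  zero_mem' := Set.mem_iInter.2 fun s₀ ↦ subset_closure (zero_mem_unimodularSums x s₀)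
  add_mem' {u v} hu hv := by
    classical
    refine Set.mem_iInter.2 fun s₀ ↦ ?_
    have hmaps : ∀ w ∈ unimodularSums x s₀, w + v ∈ closure (unimodularSums x s₀) := by
      rintro _ ⟨s, hs, ω, rfl⟩
      exact map_mem_closure (continuous_const_add _) (Set.mem_iInter.1 hv (s₀ ∪ s))
        fun w hw ↦ add_mem_unimodularSums hs ω hw
    simpa using map_mem_closure (continuous_add_const v) (Set.mem_iInter.1 hu s₀) hmaps

theorem isClosed_tailUnimodularSums (x : ι → H) : IsClosed (tailUnimodularSums x : Set H) :=
  isClosed_iInter fun _ ↦ isClosed_closure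

theorem dense_unimodularSums {D : Set H}
    (hD : Dense (Submodule.span ℂ D : Set H))
    (hx : ∀ u ∈ D, ∀ β : ℂ, β • u ∈ tailUnimodularSums x) (s₀ : Finset ι) :
    Dense (unimodularSums x s₀) := by
  have hspan : (Submodule.span ℂ D : Set H) ⊆ tailUnimodularSums x := by
    change (Submodule.span ℂ D).toAddSubmonoid ≤ tailUnimodularSums x
    rw [Submodule.span_eq_closure, AddSubmonoid.closure_le]
    rintro _ ⟨β, -, u, hu, rfl⟩
    exact hx u hu β
  intro v
  exact Set.mem_iInter.1
    (closure_minimal hspan (isClosed_tailUnimodularSums x) (hD.closure_eq ▸ Set.mem_univ v)) s₀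

theorem smul_mem_tailUnimodularSums {e : ℕ → ι} (he : Function.Injective e) {a : ℕ → ℝ}
    (ha : ∀ k, 0 ≤ a k) (ha0 : Tendsto a atTop (𝓝 0)) (hdiv : ¬ Summable a) {y : ℕ → H} {u : H}
    (hy : Tendsto y atTop (𝓝 u)) (hxy : ∀ k, x (e k) = a k • y k) (β : ℂ) :
    β • u ∈ tailUnimodularSums x := by
  refine Set.mem_iInter.2 fun s₀ ↦ ?_
  obtain ⟨n, hn⟩ := exists_tendsto_sum_Ico_smul ha ha0 hdiv hy (norm_nonneg β)
  let z : Circle := Circle.exp β.arg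
  have hβ : (z : ℂ) • ‖β‖ • u = β • u := by
    rw [← Complex.coe_smul, smul_smul, mul_comm, Circle.coe_exp, Complex.norm_mul_exp_arg_mul_I]
  have havoid : ∀ᶠ K in atTop, ∀ k ≥ K, e k ∉ s₀ := by
    refine eventually_forall_ge_atTop.2 ?_
    rw [← Nat.cofinite_eq_atTop]
    exact he.tendsto_cofinite.eventually s₀.finite_toSet.eventually_cofinite_notMem
  refine mem_closure_of_tendsto (hβ ▸ hn.const_smul (z : ℂ)) ?_
  filter_upwards [havoid] with K hK
  refine ⟨(Finset.Ico K (n K)).map ⟨e, he⟩, ?_, fun _ ↦ z, ?_⟩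
  · refine Finset.disjoint_right.2 fun i hi ↦ ?_
    obtain ⟨k, hk, rfl⟩ := Finset.mem_map.1 hi
    exact hK k (Finset.mem_Ico.1 hk).1
  · simp only [Finset.sum_map, Function.Embedding.coeFn_mk, hxy, Finset.smul_sum]

end UnimodularSums

section RandomSeries

variable {ι H : Type*} [Countable ι] [NormedAddCommGroup H] [NormedSpace ℂ H] {x : ι → H}
  {μ : Measure (ι → Circle)}

/-- The function `ω ↦ ω i • x i` on the torus, as an element of `L²`. -/
noncomputable def randomTerm (μ : Measure (ι → Circle)) [IsFiniteMeasure μ] (x : ι → H) (i : ι) :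
    Lp H 2 μ :=
  ContinuousMap.toLp 2 μ ℂ ⟨fun ω ↦ (ω i : ℂ) • x i, by fun_prop⟩

/-- The sum in `L²` of the series `∑ i, ω i • x i` with random coefficients on the unit circle. -/
noncomputable def randomSeries (μ : Measure (ι → Circle)) [IsFiniteMeasure μ] (x : ι → H) :
    Lp H 2 μ :=
  ∑' i, randomTerm μ x i

variable [IsFiniteMeasure μ]

theorem coeFn_sum_randomTerm (s : Finset ι) :
    ⇑(∑ i ∈ s, randomTerm μ x i) =ᵐ[μ] fun ω ↦ ∑ i ∈ s, (ω i : ℂ) • x i := by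
  simp only [randomTerm, ← map_sum]
  filter_upwards [ContinuousMap.coeFn_toLp (p := 2) (𝕜 := ℂ) μ
    (∑ i ∈ s, ⟨fun ω : ι → Circle ↦ (ω i : ℂ) • x i, by fun_prop⟩)] with ω hω
  simpa using hω

theorem compMeasurePreserving_randomTerm [μ.IsMulLeftInvariant] {T : H →L[ℂ] H} {c : ι → Circle}
    (hT : ∀ i, T (x i) = (c i : ℂ) • x i) (i : ι) :
    Lp.compMeasurePreserving (c * ·) (measurePreserving_mul_left μ c) (randomTerm μ x i) =
      T.compLp (randomTerm μ x i) := by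
  have hterm : randomTerm μ x i =ᵐ[μ] fun ω ↦ (ω i : ℂ) • x i := ContinuousMap.coeFn_toLp μ _
  have hmp := measurePreserving_mul_left μ c
  refine Lp.ext ?_
  filter_upwards [Lp.coeFn_compMeasurePreserving (randomTerm μ x i) hmp,
    T.coeFn_compLp (randomTerm μ x i), hterm, hmp.quasiMeasurePreserving.ae hterm]
    with ω hrotate hcomp hω hcω
  rw [hrotate, Function.comp_apply, hcω, hcomp, hω, map_smul, hT, Pi.mul_apply, Circle.coe_mul,
    mul_comm, mul_smul]

end RandomSeries

section SecondMoment

theorem lp_norm_sq_eq_integral {E Ω : Type*} [NormedAddCommGroup E] [MeasurableSpace Ω]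
    {μ : Measure Ω} (f : Lp E 2 μ) : ‖f‖ ^ 2 = ∫ ω, ‖f ω‖ ^ 2 ∂μ := by
  have h0 : 0 ≤ ∫ ω, ‖f ω‖ ^ 2 ∂μ := integral_nonneg fun ω ↦ sq_nonneg _
  rw [Lp.norm_def, (Lp.memLp f).eLpNorm_eq_integral_rpow_norm (by simp) (by simp)]
  simp only [ENNReal.toReal_ofNat, Real.rpow_ofNat]
  rw [ENNReal.toReal_ofReal (Real.rpow_nonneg h0 _)]
  exact_mod_cast Real.rpow_inv_natCast_pow h0 two_ne_zero

variable {H : Type*} [NormedAddCommGroup H] [InnerProductSpace ℂ H]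

/-- Orthogonality by a sign change: a symmetry which flips `u` and fixes `v` makes the integrals of
`‖u + v‖ ^ 2` and `‖u - v‖ ^ 2` agree, and the parallelogram law computes their sum. -/
theorem setIntegral_norm_add_sq_of_mul_left_eq_neg {G : Type*} [Group G]
    [MeasurableSpace G] [MeasurableMul G] {μ : Measure G} [μ.IsMulLeftInvariant] {B : Set G}
    (hB : MeasurableSet B) {g : G} (hBg : ∀ ω, g * ω ∈ B ↔ ω ∈ B) {u v : G → H}
    (hu : MemLp u 2 μ) (hv : MemLp v 2 μ) (hug : ∀ ω, u (g * ω) = -u ω)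
    (hvg : ∀ ω, v (g * ω) = v ω) :
    ∫ ω in B, ‖u ω + v ω‖ ^ 2 ∂μ = ∫ ω in B, ‖u ω‖ ^ 2 ∂μ + ∫ ω in B, ‖v ω‖ ^ 2 ∂μ := by
  have hint {f : G → H} (hf : MemLp f 2 μ) : IntegrableOn (fun ω ↦ ‖f ω‖ ^ 2) B μ :=
    (hf.integrable_norm_pow two_ne_zero).integrableOn
  have hflip : ∫ ω in B, ‖u ω + v ω‖ ^ 2 ∂μ = ∫ ω in B, ‖u ω - v ω‖ ^ 2 ∂μ := by
    rw [← integral_indicator hB, ← integral_indicator hB, ← integral_mul_left_eq_self _ g]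
    refine integral_congr_ae (ae_of_all _ fun ω ↦ ?_)
    classical
    simp only [Set.indicator_apply, hBg, hug, hvg, neg_add_eq_sub, norm_sub_rev]
  have hsum : ∫ ω in B, ‖u ω + v ω‖ ^ 2 ∂μ + ∫ ω in B, ‖u ω - v ω‖ ^ 2 ∂μ =
      2 * (∫ ω in B, ‖u ω‖ ^ 2 ∂μ + ∫ ω in B, ‖v ω‖ ^ 2 ∂μ) := by
    have hadd : IntegrableOn (fun ω ↦ ‖u ω + v ω‖ ^ 2) B μ := hint (hu.add hv)
    have hsub : IntegrableOn (fun ω ↦ ‖u ω - v ω‖ ^ 2) B μ := hint (hu.sub hv)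
    rw [← integral_add hadd hsub, ← integral_add (hint hu) (hint hv), ← integral_const_mul]
    congr with ω
    simpa only [sq] using parallelogram_law_with_norm ℂ (u ω) (v ω)
  linarith

variable {ι : Type*} [Countable ι] {x : ι → H} {μ : Measure (ι → Circle)}

theorem setIntegral_norm_sum_circle_smul_sq [μ.IsMulLeftInvariant] [IsFiniteMeasure μ]
    {B : Set (ι → Circle)} (hB : MeasurableSet B)
    (s : Finset ι) (hBs : DependsOn (· ∈ B) (s : Set ι)ᶜ) :
    ∫ ω in B, ‖∑ i ∈ s, (ω i : ℂ) • x i‖ ^ 2 ∂μ = μ.real B * ∑ i ∈ s, ‖x i‖ ^ 2 := by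
  classical
  induction s using Finset.induction_on with
  | empty => simp
  | insert k s hk ih =>
    have hflip {i : ι} (hi : i ≠ k) (ω : ι → Circle) :
        (Pi.mulSingle k (-1) * ω : ι → Circle) i = ω i := by
      simp [Pi.mulSingle_eq_of_ne hi]
    have hBk (ω : ι → Circle) : Pi.mulSingle k (-1) * ω ∈ B ↔ ω ∈ B :=
      (hBs fun i hi ↦ hflip (fun hik ↦ hi (by simp [hik])) ω).to_iff
    have hmemLp {f : (ι → Circle) → H} (hf : Continuous f) : MemLp f 2 μ :=
      hf.memLp_of_hasCompactSupport (.of_compactSpace f)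
    have hcross := setIntegral_norm_add_sq_of_mul_left_eq_neg hB hBk
      (u := fun ω ↦ (ω k : ℂ) • x k) (hmemLp (by fun_prop))
      (hmemLp (continuous_sum_circle_smul x s)) (fun ω ↦ by simp)
      fun ω ↦ dependsOn_sum_circle_smul x s fun i hi ↦ hflip (fun hik ↦ hk (hik ▸ hi)) ω
    simp only [Finset.sum_insert hk, hcross, norm_smul, Circle.norm_coe, one_mul,
      setIntegral_const, smul_eq_mul, mul_add]
    rw [ih (hBs.mono (by simp))]

variable [IsFiniteMeasure μ] [μ.IsMulLeftInvariant]

theorem norm_sq_restrict_sum_randomTerm {B : Set (ι → Circle)} (hB : MeasurableSet B)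
    (s : Finset ι) (hBs : DependsOn (· ∈ B) (s : Set ι)ᶜ) :
    ‖LpToLpRestrictCLM (ι → Circle) H ℂ μ 2 B (∑ i ∈ s, randomTerm μ x i)‖ ^ 2 =
      μ.real B * ∑ i ∈ s, ‖x i‖ ^ 2 := by
  rw [lp_norm_sq_eq_integral, ← setIntegral_norm_sum_circle_smul_sq hB s hBs]
  refine integral_congr_ae ?_
  filter_upwards [LpToLpRestrictCLM_coeFn ℂ B (∑ i ∈ s, randomTerm μ x i),
    ae_restrict_of_ae (coeFn_sum_randomTerm (μ := μ) (x := x) s)] with ω hrestrict hsum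
  rw [hrestrict, hsum]

theorem norm_sq_sum_randomTerm (s : Finset ι) :
    ‖∑ i ∈ s, randomTerm μ x i‖ ^ 2 = μ.real Set.univ * ∑ i ∈ s, ‖x i‖ ^ 2 := by
  rw [lp_norm_sq_eq_integral, ← setIntegral_norm_sum_circle_smul_sq .univ s fun _ _ _ ↦ rfl,
    setIntegral_univ]
  exact integral_congr_ae ((coeFn_sum_randomTerm s).fun_comp (‖·‖ ^ 2))

theorem summable_randomTerm [CompleteSpace H] (hx : Summable fun i ↦ ‖x i‖ ^ 2) :
    Summable (randomTerm μ x) := by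
  refine summable_iff_vanishing_norm.2 fun ε hε ↦ ?_
  obtain ⟨s, hs⟩ := summable_iff_vanishing_norm.1 (hx.mul_left (μ.real Set.univ)) (ε ^ 2)
    (by positivity)
  refine ⟨s, fun t ht ↦ lt_of_pow_lt_pow_left₀ 2 hε.le ?_⟩
  rw [norm_sq_sum_randomTerm, Finset.mul_sum]
  exact (le_abs_self _).trans_lt (hs t ht)

theorem norm_sq_restrict_randomSeries_sub_le [CompleteSpace H] (hx : Summable fun i ↦ ‖x i‖ ^ 2)
    {B : Set (ι → Circle)} (hB : MeasurableSet B) {s : Finset ι}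
    (hBs : DependsOn (· ∈ B) (s : Set ι))
    {r : ℝ} (hr : ∀ t : Finset ι, Disjoint t s → ∑ i ∈ t, ‖x i‖ ^ 2 ≤ r) :
    ‖LpToLpRestrictCLM (ι → Circle) H ℂ μ 2 B (randomSeries μ x - ∑ i ∈ s, randomTerm μ x i)‖ ^ 2 ≤
      μ.real B * r := by
  classical
  have hlim : Tendsto (fun t : Finset ι ↦ ∑ i ∈ t \ s, randomTerm μ x i) atTop
      (𝓝 (randomSeries μ x - ∑ i ∈ s, randomTerm μ x i)) := by
    refine ((summable_randomTerm hx).hasSum.sub_const _).congr' ?_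
    filter_upwards [eventually_ge_atTop s] with t ht
    rw [← Finset.sum_sdiff ht, add_sub_cancel_right]
  have hcont : Continuous fun f : Lp H 2 μ ↦ ‖LpToLpRestrictCLM (ι → Circle) H ℂ μ 2 B f‖ ^ 2 := by
    fun_prop
  refine le_of_tendsto' ((hcont.tendsto _).comp hlim) fun t ↦ ?_
  have hdisj : Disjoint (t \ s) s := Finset.sdiff_disjoint
  simp only [Function.comp_apply]
  rw [norm_sq_restrict_sum_randomTerm hB _ (hBs.mono fun i hi ↦ by simp_all)]
  gcongr
  exact hr _ hdisj

theorem measure_randomSeries_near_pos [CompleteSpace H] (hx : Summable fun i ↦ ‖x i‖ ^ 2)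
    {B : Set (ι → Circle)} (hB : MeasurableSet B) (hB0 : μ B ≠ 0) {s : Finset ι}
    (hBs : DependsOn (· ∈ B) (s : Set ι))
    {r : ℝ} (hr : ∀ t : Finset ι, Disjoint t s → ∑ i ∈ t, ‖x i‖ ^ 2 ≤ r) :
    0 < μ {ω ∈ B | ‖randomSeries μ x ω - ∑ i ∈ s, (ω i : ℂ) • x i‖ ^ 2 ≤ r} := by
  let f : Lp H 2 μ := randomSeries μ x - ∑ i ∈ s, randomTerm μ x i
  have hint : IntegrableOn (fun ω ↦ ‖f ω‖ ^ 2) B μ :=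
    ((Lp.memLp f).integrable_norm_pow two_ne_zero).integrableOn
  have haverage : ⨍ ω in B, ‖f ω‖ ^ 2 ∂μ ≤ r := by
    rw [setAverage_eq, smul_eq_mul]
    refine inv_mul_le_of_le_mul₀ measureReal_nonneg (hr ∅ (by simp) |>.trans' (by simp)) ?_
    refine (le_of_eq ?_).trans (norm_sq_restrict_randomSeries_sub_le hx hB hBs hr)
    rw [lp_norm_sq_eq_integral]
    exact integral_congr_ae ((LpToLpRestrictCLM_coeFn ℂ B f).symm.fun_comp (‖·‖ ^ 2))
  refine (measure_le_setAverage_pos hB0 (measure_ne_top μ B) hint).trans_le (measure_mono_ae ?_)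
  filter_upwards [Lp.coeFn_sub (randomSeries μ x) (∑ i ∈ s, randomTerm μ x i),
    coeFn_sum_randomTerm (μ := μ) (x := x) s] with ω hsub hsum hω
  refine ⟨hω.1, ?_⟩
  rw [← hsum, ← Pi.sub_apply, ← hsub]
  exact hω.2.trans haverage

theorem measure_preimage_randomSeries_pos [CompleteSpace H] [μ.IsOpenPosMeasure]
    (hx : Summable fun i ↦ ‖x i‖ ^ 2) (hdense : ∀ s₀, Dense (unimodularSums x s₀)) {U : Set H}
    (hU : IsOpen U) (hne : U.Nonempty) : 0 < μ (randomSeries μ x ⁻¹' U) := by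
  obtain ⟨p, hp⟩ := hne
  obtain ⟨ε, hε, hεU⟩ := Metric.isOpen_iff.1 hU p hp
  obtain ⟨s₀, hs₀⟩ := summable_iff_vanishing_norm.1 hx ((ε / 2) ^ 2) (by positivity)
  obtain ⟨s, hs₀s, ω₀, hω₀⟩ := exists_norm_sum_circle_smul_sub_lt (hdense s₀) p (half_pos hε)
  let B : Set (ι → Circle) := {ω | ‖∑ i ∈ s, (ω i : ℂ) • x i - p‖ < ε / 2}
  have hB : IsOpen B := isOpen_lt (by fun_prop) continuous_const
  have hBs : DependsOn (· ∈ B) (s : Set ι) := fun ω ω' h ↦ by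
    simp only [B, Set.mem_ofPred_eq, dependsOn_sum_circle_smul x s h]
  have htail (t : Finset ι) (ht : Disjoint t s) : ∑ i ∈ t, ‖x i‖ ^ 2 ≤ (ε / 2) ^ 2 :=
    (le_abs_self _).trans (hs₀ t (ht.mono_right hs₀s)).le
  refine (measure_randomSeries_near_pos hx hB.measurableSet (hB.measure_ne_zero μ ⟨ω₀, hω₀⟩) hBs
    htail).trans_le (measure_mono fun ω ⟨hωB, hω⟩ ↦ hεU ?_)
  rw [Metric.mem_ball, dist_eq_norm]
  calc ‖randomSeries μ x ω - p‖
      ≤ ‖randomSeries μ x ω - ∑ i ∈ s, (ω i : ℂ) • x i‖ + ‖∑ i ∈ s, (ω i : ℂ) • x i - p‖ :=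
        norm_sub_le_norm_sub_add_norm_sub ..
    _ < ε / 2 + ε / 2 := add_lt_add_of_le_of_lt (le_of_sq_le_sq hω (by positivity)) hωB
    _ = ε := add_halves ε

theorem ae_randomSeries_mul_left [CompleteSpace H] {T : H →L[ℂ] H} {c : ι → Circle}
    (hT : ∀ i, T (x i) = (c i : ℂ) • x i) (hx : Summable fun i ↦ ‖x i‖ ^ 2) :
    ∀ᵐ ω ∂μ, randomSeries μ x (c * ω) = T (randomSeries μ x ω) := by
  have hmp := measurePreserving_mul_left μ c
  have hseries : Lp.compMeasurePreserving (c * ·) hmp (randomSeries μ x) =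
      T.compLpL 2 μ (randomSeries μ x) := by
    have hsum := summable_randomTerm (μ := μ) hx
    rw [randomSeries, hsum.map_tsum _ (Lp.isometry_compMeasurePreserving hmp).continuous,
      (T.compLpL 2 μ).map_tsum hsum]
    exact tsum_congr fun i ↦ compMeasurePreserving_randomTerm hT i
  filter_upwards [Lp.coeFn_compMeasurePreserving (randomSeries μ x) hmp,
    T.coeFn_compLpL (randomSeries μ x)] with ω hrotate hcomp
  rw [← hcomp, ← hseries, hrotate, Function.comp_apply]

end SecondMoment

theorem frequentlyHypercyclic_of_linearIndependent_eigenvalues {ι H : Type*} [Countable ι]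
    [NormedAddCommGroup H] [InnerProductSpace ℂ H] [CompleteSpace H] [SecondCountableTopology H]
    {T : H →L[ℂ] H} {x : ι → H} {c : ι → Circle}
    (hc : LinearIndependent ℤ fun i ↦ Additive.ofMul (c i))
    (hT : ∀ i, T (x i) = (c i : ℂ) • x i) (hx : Summable fun i ↦ ‖x i‖ ^ 2)
    (hdense : ∀ s₀, Dense (unimodularSums x s₀)) : FrequentlyHypercyclic T := by
  borelize H
  let μ : Measure (ι → Circle) := Measure.haarMeasure ⊤
  have : IsProbabilityMeasure μ := ⟨Measure.haarMeasure_self⟩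
  exact frequentlyHypercyclic_of_ergodic_factor (ergodic_mul_left_of_linearIndependent hc (μ := μ))
    (Lp.stronglyMeasurable (randomSeries μ x)).measurable (ae_randomSeries_mul_left hT hx)
    fun U hU hne ↦ measure_preimage_randomSeries_pos hx hdense hU hne

section Condensation

variable {X : Type*} [NormedAddCommGroup X] [NormedSpace ℂ X] {T : X →L[ℂ] X}

/-- The unimodular eigenvalues of `T` which have an eigenvector in `U`; every unimodular number
counts as soon as `0 ∈ U`. -/
def unimodularEigenvalues (T : X →L[ℂ] X) (U : Set X) : Set Circle :=
  {c | ∃ y ∈ U, T y = (c : ℂ) • y}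

theorem unimodularEigenvalues_mono {U V : Set X} (h : U ⊆ V) :
    unimodularEigenvalues T U ⊆ unimodularEigenvalues T V :=
  fun _ ⟨y, hy, hTy⟩ ↦ ⟨y, h hy, hTy⟩

/-- The vectors that are limits of eigenvectors belonging to uncountably many unimodular
eigenvalues, however small the neighbourhood. -/
def condensationVectors (T : X →L[ℂ] X) : Set X :=
  {u | ∀ U ∈ 𝓝 u, ¬ (unimodularEigenvalues T U).Countable}

theorem exists_countable_eigenvector_mem_condensationVectors [SecondCountableTopology X]
    (T : X →L[ℂ] X) : ∃ D : Set Circle, D.Countable ∧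
      ∀ c ∉ D, ∀ u, T u = (c : ℂ) • u → u ∈ condensationVectors T := by
  let 𝒱 := {V ∈ TopologicalSpace.countableBasis X | (unimodularEigenvalues T V).Countable}
  refine ⟨⋃ V ∈ 𝒱, unimodularEigenvalues T V,
    ((TopologicalSpace.countable_countableBasis X).mono fun V hV ↦ hV.1).biUnion fun V hV ↦ hV.2,
    fun c hc u hu U hU hcount ↦ hc ?_⟩
  obtain ⟨V, hV, huV, hVU⟩ := (TopologicalSpace.isBasis_countableBasis X).mem_nhds_iff.1 hU
  exact Set.mem_biUnion (x := V) ⟨hV, hcount.mono (unimodularEigenvalues_mono hVU)⟩ ⟨u, huV, hu⟩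

theorem dense_span_condensationVectors [SecondCountableTopology X] (hT : PerfectlySpanning T) :
    Dense (Submodule.span ℂ (condensationVectors T) : Set X) := by
  obtain ⟨σ, _, hatomless, hcircle, hspan⟩ := hT
  have : NullSingletonClass σ := ⟨hatomless⟩
  obtain ⟨D, hD, hDT⟩ := exists_countable_eigenvector_mem_condensationVectors T
  have hD' : ((fun c : Circle ↦ (c : ℂ)) '' D).Countable := hD.image _
  have hcircle_meas : MeasurableSet {c : ℂ | ‖c‖ = 1} :=
    measurableSet_eq_fun (by fun_prop) (by fun_prop)
  refine (hspan ({c | ‖c‖ = 1} \ (fun c : Circle ↦ (c : ℂ)) '' D) Set.sdiff_subset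
    (hcircle_meas.diff hD'.measurableSet)
    (by rw [measure_sdiff_null (hD'.measure_zero σ), hcircle])).mono (Submodule.span_mono ?_)
  refine Set.iUnion₂_subset fun c ⟨hc, hcD⟩ u hu ↦ ?_
  let c' : Circle := ⟨c, mem_sphere_zero_iff_norm.2 hc⟩
  exact hDT c' (fun h ↦ hcD ⟨c', h, rfl⟩) u hu

theorem exists_countable_subset_dense_span [SecondCountableTopology X] {S : Set X}
    (hS : Dense (Submodule.span ℂ S : Set X)) :
    ∃ D ⊆ S, D.Countable ∧ Dense (Submodule.span ℂ D : Set X) := by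
  obtain ⟨D, hDS, hD, hSD⟩ :=
    (TopologicalSpace.IsSeparable.of_separableSpace S).exists_countable_dense_subset
  refine ⟨D, hDS, hD, Submodule.dense_iff_topologicalClosure_eq_top.2 (top_unique ?_)⟩
  rw [← Submodule.dense_iff_topologicalClosure_eq_top.1 hS]
  exact Submodule.topologicalClosure_minimal _
    (Submodule.span_le.2 (hSD.trans (closure_mono Submodule.subset_span)))
    (Submodule.isClosed_topologicalClosure _)

theorem exists_linearIndependent_eigenvectors_near {ι : Type*} [Countable ι] {u : ι → X}
    (hu : ∀ i, u i ∈ condensationVectors T) {ε : ι → ℝ} (hε : ∀ i, 0 < ε i) :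
    ∃ (c : ι → Circle) (y : ι → X), (LinearIndependent ℤ fun i ↦ Additive.ofMul (c i)) ∧
      (∀ i, T (y i) = (c i : ℂ) • y i) ∧ ∀ i, ‖y i - u i‖ < ε i := by
  obtain ⟨c, hcT, hc⟩ := exists_circle_linearIndependent fun i ↦
    hu i _ (Metric.ball_mem_nhds (u i) (hε i))
  choose y hy hTy using hcT
  exact ⟨c, y, hc, hTy, fun i ↦ mem_ball_iff_norm.1 (hy i)⟩

end Condensation

section Weights

theorem exists_pos_summable_mul_sq {κ : Type*} [Countable κ] {b : κ → ℝ} (hb : ∀ d, 0 < b d) :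
    ∃ w : κ → ℝ, (∀ d, 0 < w d) ∧ Summable fun d ↦ (w d * b d) ^ 2 := by
  obtain ⟨δ, hδ, _, hsum, _⟩ := NNReal.exists_pos_sum_of_countable one_ne_zero κ
  refine ⟨fun d ↦ √(δ d) / b d, fun d ↦ div_pos (Real.sqrt_pos.2 (hδ d)) (hb d),
    (NNReal.summable_coe.2 hsum.summable).congr fun d ↦ ?_⟩
  rw [div_mul_cancel₀ _ (hb d).ne', Real.sq_sqrt (δ d).coe_nonneg]

theorem summable_norm_harmonic_smul_sq {κ E : Type*} [NormedAddCommGroup E] [NormedSpace ℝ E]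
    {w b : κ → ℝ} (hw : ∀ d, 0 ≤ w d) (hsum : Summable fun d ↦ (w d * b d) ^ 2) {y : κ × ℕ → E}
    (hy : ∀ i, ‖y i‖ ≤ b i.1) :
    Summable fun i : κ × ℕ ↦ ‖(w i.1 / (i.2 + 1 : ℝ)) • y i‖ ^ 2 := by
  have hharmonic : Summable fun k : ℕ ↦ (1 / (k + 1 : ℝ)) ^ 2 := by
    simpa [div_pow] using (summable_nat_add_iff 1).2 (Real.summable_one_div_nat_pow.2 one_lt_two)
  refine .of_nonneg_of_le (fun _ ↦ sq_nonneg _) (fun i ↦ ?_)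
    (hsum.mul_of_nonneg hharmonic (fun _ ↦ sq_nonneg _) fun _ ↦ sq_nonneg _)
  rw [norm_smul, Real.norm_of_nonneg (div_nonneg (hw i.1) (by positivity)), ← mul_pow,
    mul_one_div, div_mul_eq_mul_div]
  have := hw i.1
  gcongr
  exact hy i

theorem smul_mem_tailUnimodularSums_harmonic {κ H : Type*} [NormedAddCommGroup H]
    [NormedSpace ℂ H] {w : ℝ} (hw : 0 < w) {d : κ} {u : H} {x y : κ × ℕ → H}
    (hx : ∀ k : ℕ, x (d, k) = (w / (k + 1 : ℝ)) • y (d, k))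
    (hy : ∀ k : ℕ, ‖y (d, k) - u‖ < 1 / (k + 1 : ℝ)) (β : ℂ) :
    β • u ∈ tailUnimodularSums x := by
  have hlim : Tendsto (fun k : ℕ ↦ 1 / (k + 1 : ℝ)) atTop (𝓝 0) :=
    tendsto_one_div_add_atTop_nhds_zero_nat
  have hdiv : ¬ Summable fun k : ℕ ↦ w / (k + 1 : ℝ) := by
    simp_rw [div_eq_mul_one_div w, summable_mul_left_iff hw.ne']
    exact_mod_cast mt (summable_nat_add_iff 1).1 Real.not_summable_one_div_natCast
  refine smul_mem_tailUnimodularSums (e := fun k ↦ (d, k)) (Prod.mk_right_injective d)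
    (fun k ↦ div_nonneg hw.le (by positivity)) ?_ hdiv ?_ hx β
  · simpa [div_eq_mul_inv] using hlim.const_mul w
  · exact tendsto_iff_norm_sub_tendsto_zero.2
      (squeeze_zero (fun _ ↦ norm_nonneg _) (fun k ↦ (hy k).le) hlim)

end Weights

/-- If a bounded operator `T` on a complex separable infinite-dimensional Hilbert
space has a perfectly spanning set of eigenvectors associated to unimodular
eigenvalues, then `T` is frequently hypercyclic. -/
theorem perfectlySpanning_implies_frequentlyHypercyclic_hilbert
    {H : Type*} [NormedAddCommGroup H] [InnerProductSpace ℂ H] [CompleteSpace H]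
    [TopologicalSpace.SeparableSpace H] (hdim : ¬ FiniteDimensional ℂ H)
    (T : H →L[ℂ] H) (hT : PerfectlySpanning T) :
    FrequentlyHypercyclic T := by
  have : SecondCountableTopology H := UniformSpace.secondCountable_of_separable H
  obtain ⟨D, hDT, hD, hspan⟩ :=
    exists_countable_subset_dense_span (dense_span_condensationVectors hT)
  have := hD.to_subtype
  obtain ⟨c, y, hc, hTy, hy⟩ := exists_linearIndependent_eigenvectors_near
    (u := fun i : D × ℕ ↦ (i.1 : H)) (fun i ↦ hDT i.1.2) (ε := fun i ↦ 1 / (i.2 + 1 : ℝ))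
    fun i ↦ by positivity
  have hybound (i : D × ℕ) : ‖y i‖ ≤ ‖(i.1 : H)‖ + 1 := by
    have hle : 1 / (i.2 + 1 : ℝ) ≤ 1 := (div_le_one (by positivity)).2 (by simp)
    linarith [norm_le_norm_add_norm_sub' (y i) (i.1 : H), hy i]
  obtain ⟨w, hw, hsum⟩ := exists_pos_summable_mul_sq (b := fun d : D ↦ ‖(d : H)‖ + 1)
    fun d ↦ by positivity
  refine frequentlyHypercyclic_of_linearIndependent_eigenvalues hc
    (x := fun i ↦ (w i.1 / (i.2 + 1 : ℝ)) • y i) (fun i ↦ ?_)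
    (summable_norm_harmonic_smul_sq (fun d ↦ (hw d).le) hsum hybound)
    (dense_unimodularSums hspan fun u hu ↦ smul_mem_tailUnimodularSums_harmonic (hw ⟨u, hu⟩)
      (fun _ ↦ rfl) fun k ↦ hy (⟨u, hu⟩, k))
  rw [T.map_smul_of_tower, hTy, smul_comm]
end
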